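/- arXiv:1605.05115 — 12 statements merged into one kernel-verified Lean document; each statement's English description precedes it below -/
import Mathlib

section
/- Let s_{ij} and s̃_{ij} (1 ≤ i,j ≤ 3) be real numbers such that the second and third rows coincide (s_{2j} = s̃_{2j} and s_{3j} = s̃_{3j} for j = 1,2,3) and such that s_{11}·s̃_{12} = s̃_{11}·s_{12} and s_{13}·s̃_{12} = s̃_{13}·s_{12}. Then s^{11} = s̃^{11}, s^{21}·s̃_{12} = s̃^{21}·s_{12}, s^{31}·s̃_{12} = s̃^{31}·s_{12}, and det S · s̃_{12} = det S̃ · s_{12}. Consequently, if s_{12}, s̃_{12}, s^{11}, s^{21}, s^{31}, s̃^{21}, s̃^{31} are all nonzero, then det S/(s_{12} s^{11}) = det S̃/(s̃_{12} s̃^{11}), det S/s^{21} = det S̃/s̃^{21}, and det S/s^{31} = det S̃/s̃^{31} (i.e. H₁²/s_{12} = H̃₁²/s̃_{12}, H₂² = H̃₂², H₃² = H̃₃²). -/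
/-- The signed first-column minors of a 3×3 matrix `S = (s_{ij})` (indices `0,1,2`):
`sminor S 0 = s^{11} = s₂₂s₃₃ − s₂₃s₃₂`, `sminor S 1 = s^{21} = s₁₃s₃₂ − s₁₂s₃₃`,
`sminor S 2 = s^{31} = s₁₂s₂₃ − s₁₃s₂₂`. -/
def sminor (S : Matrix (Fin 3) (Fin 3) ℝ) : Fin 3 → ℝ :=
  ![S 1 1 * S 2 2 - S 1 2 * S 2 1,
    S 0 2 * S 2 1 - S 0 1 * S 2 2,
    S 0 1 * S 1 2 - S 0 2 * S 1 1]

/- Both `S.det` and, for `j ≠ i`, the cofactor `S.adjugate k j` are linear in row `i` of `S`, while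
`S.adjugate k i` does not involve that row. Rescaling row `i` so that `S` and `T` become equal
therefore multiplies `S.det` and every `S.adjugate k j` with `j ≠ i` by the same factor, which
cancels in the quotients. -/

theorem updateRow_eq_updateRow_of_forall_ne {m n α : Type*} [DecidableEq m] {S T : Matrix m n α}
    {i : m} (hrow : ∀ l ≠ i, S l = T l) (v : n → α) :
    S.updateRow i v = T.updateRow i v := by
  ext l c
  by_cases hl : l = i
  · rw [hl, Matrix.updateRow_self, Matrix.updateRow_self]
  · rw [Matrix.updateRow_ne hl, Matrix.updateRow_ne hl, hrow l hl]

section CommRing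

variable {n R : Type*} [DecidableEq n] [Fintype n] [CommRing R] {S T : Matrix n n R} {i j : n}
  {a b : R}

theorem det_mul_eq_det_mul_of_row_smul_eq (hrow : ∀ l ≠ i, S l = T l)
    (hi : a • S i = b • T i) : S.det * a = T.det * b :=
  calc S.det * a = (S.updateRow i (a • S i)).det := by
        rw [Matrix.det_updateRow_smul, Matrix.updateRow_eq_self, mul_comm]
    _ = (T.updateRow i (b • T i)).det := by
        rw [hi, updateRow_eq_updateRow_of_forall_ne hrow]
    _ = T.det * b := by
        rw [Matrix.det_updateRow_smul, Matrix.updateRow_eq_self, mul_comm]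

theorem adjugate_apply_eq_of_forall_ne (hrow : ∀ l ≠ i, S l = T l) (k : n) :
    S.adjugate k i = T.adjugate k i := by
  rw [Matrix.adjugate_apply, Matrix.adjugate_apply, updateRow_eq_updateRow_of_forall_ne hrow]

theorem adjugate_mul_eq_adjugate_mul_of_row_smul_eq (hrow : ∀ l ≠ i, S l = T l)
    (hi : a • S i = b • T i) (hj : j ≠ i) (k : n) :
    S.adjugate k j * a = T.adjugate k j * b := by
  rw [Matrix.adjugate_apply, Matrix.adjugate_apply]
  refine det_mul_eq_det_mul_of_row_smul_eq (i := i) (fun l hl => ?_) ?_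
  · by_cases hlj : l = j
    · rw [hlj, Matrix.updateRow_self, Matrix.updateRow_self]
    · rw [Matrix.updateRow_ne hlj, Matrix.updateRow_ne hlj, hrow l hl]
  · rw [Matrix.updateRow_ne hj.symm, Matrix.updateRow_ne hj.symm, hi]

end CommRing

theorem div_eq_div_of_mul_eq_mul {K : Type*} [Field K] {a b x x' y y' : K} (hb : b ≠ 0)
    (hy : y ≠ 0) (hy' : y' ≠ 0) (hx_mul : x * a = x' * b)
    (hy_mul : y * a = y' * b) : x / y = x' / y' := by
  rw [div_eq_div_iff hy hy']
  apply mul_right_cancel₀ hb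
  calc x * y' * b = x * (y * a) := by rw [mul_assoc, hy_mul]
    _ = x * a * y := by ring
    _ = x' * b * y := by rw [hx_mul]
    _ = x' * y * b := by ring

theorem stmt2_general {n K : Type*} [DecidableEq n] [Fintype n] [Field K] {S T : Matrix n n K}
    {i : n} {a b : K} (hrow : ∀ l ≠ i, S l = T l) (hi : a • S i = b • T i) (k : n) :
    (S.adjugate k i = T.adjugate k i ∧
      (∀ j ≠ i, S.adjugate k j * a = T.adjugate k j * b) ∧
      S.det * a = T.det * b) ∧
    (b ≠ 0 →
      (a ≠ 0 → S.adjugate k i ≠ 0 →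
        S.det / (b * S.adjugate k i) = T.det / (a * T.adjugate k i)) ∧
      ∀ j ≠ i, S.adjugate k j ≠ 0 → T.adjugate k j ≠ 0 →
        S.det / S.adjugate k j = T.det / T.adjugate k j) := by
  have hadj_i := adjugate_apply_eq_of_forall_ne hrow k
  have hadj (j : n) (hj : j ≠ i) := adjugate_mul_eq_adjugate_mul_of_row_smul_eq hrow hi hj k
  have hdet := det_mul_eq_det_mul_of_row_smul_eq hrow hi
  refine ⟨⟨hadj_i, hadj, hdet⟩, fun hb => ⟨fun ha hS => ?_, fun j hj hS hT => ?_⟩⟩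
  · rw [← hadj_i]
    exact div_eq_div_of_mul_eq_mul hb (mul_ne_zero hb hS) (mul_ne_zero ha hS) hdet (by ring)
  · exact div_eq_div_of_mul_eq_mul hb hS hT hdet (hadj j hj)

theorem sminor_eq_adjugate (S : Matrix (Fin 3) (Fin 3) ℝ) : sminor S = S.adjugate 0 := by
  ext j
  fin_cases j <;> simp [sminor, Matrix.adjugate_fin_three, neg_add_eq_sub]

/-- **A Stäckel metric is determined by the second and third rows of `S` together with the
quotients `s₁₁/s₁₂` and `s₁₃/s₁₂`.** If `S` and `T = S̃` have the same second and third rows,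
`s₁₁·s̃₁₂ = s̃₁₁·s₁₂` and `s₁₃·s̃₁₂ = s̃₁₃·s₁₂`, then `s^{11} = s̃^{11}`,
`s^{21}·s̃₁₂ = s̃^{21}·s₁₂`, `s^{31}·s̃₁₂ = s̃^{31}·s₁₂` and `det S·s̃₁₂ = det S̃·s₁₂`;
consequently, when the displayed quantities are nonzero, `H₁²/s₁₂ = H̃₁²/s̃₁₂`,
`H₂² = H̃₂²` and `H₃² = H̃₃²`. -/
theorem stmt2 (S T : Matrix (Fin 3) (Fin 3) ℝ)
    (hrow2 : ∀ j : Fin 3, S 1 j = T 1 j)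
    (hrow3 : ∀ j : Fin 3, S 2 j = T 2 j)
    (h11 : S 0 0 * T 0 1 = T 0 0 * S 0 1)
    (h13 : S 0 2 * T 0 1 = T 0 2 * S 0 1) :
    (sminor S 0 = sminor T 0 ∧
     sminor S 1 * T 0 1 = sminor T 1 * S 0 1 ∧
     sminor S 2 * T 0 1 = sminor T 2 * S 0 1 ∧
     S.det * T 0 1 = T.det * S 0 1) ∧
    (S 0 1 ≠ 0 → T 0 1 ≠ 0 → sminor S 0 ≠ 0 → sminor S 1 ≠ 0 → sminor S 2 ≠ 0 →
      sminor T 1 ≠ 0 → sminor T 2 ≠ 0 →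
      S.det / (S 0 1 * sminor S 0) = T.det / (T 0 1 * sminor T 0) ∧
      S.det / sminor S 1 = T.det / sminor T 1 ∧
      S.det / sminor S 2 = T.det / sminor T 2) := by
  have hrow : ∀ l ≠ 0, S l = T l := by
    simpa [Fin.forall_fin_succ] using And.intro (funext hrow2) (funext hrow3)
  have hi : T 0 1 • S 0 = S 0 1 • T 0 := by
    ext m
    rw [Pi.smul_apply, Pi.smul_apply, smul_eq_mul, smul_eq_mul]
    match m with
    | 0 => linear_combination h11
    | 1 => exact mul_comm _ _
    | 2 => linear_combination h13
  simp only [sminor_eq_adjugate]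
  obtain ⟨⟨h0, hj, hdet⟩, hquot⟩ := stmt2_general hrow hi 0
  refine ⟨⟨h0, hj 1 (by decide), hj 2 (by decide), hdet⟩, fun hs ht hS0 hS1 hS2 hT1 hT2 => ?_⟩
  obtain ⟨hH0, hHj⟩ := hquot hs
  exact ⟨hH0 ht hS0, hHj 1 (by decide) hS1 hT1, hHj 2 (by decide) hS2 hT2⟩
end

section
/- Let I ⊆ ℝ be an open interval, let h, h̃ : I → (0,∞) be C² functions, let F, F̃ : I → ℝ be continuous and let c ∈ ℝ. Assume that for all x ∈ I: −c·F(x) + (1/16)·((log h)'(x))² + (1/4)·(log h)''(x) = −c·F̃(x) + (1/16)·((log h̃)'(x))² + (1/4)·(log h̃)''(x). Then the function u := (h/h̃)^{1/4} is C² on I and satisfies u''(x) + (1/2)·(log h̃)'(x)·u'(x) + c·(F̃(x) − F(x))·u(x) = 0 for all x ∈ I. -/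
/-!
Writing `L = log h` and `M = log h̃`, the function `u = (h / h̃) ^ r` is `exp φ` with
`φ = r (L - M)`, so that `u' = φ' u` and `u'' = (φ'' + φ' ^ 2) u`. Since
`(L' - M') ^ 2 + 2 M' (L' - M') = L' ^ 2 - M' ^ 2`, adding the first-order term `2 r M' u'` removes
the cross terms and leaves `((r L'' + r ^ 2 L' ^ 2) - (r M'' + r ^ 2 M' ^ 2)) u`. For `r = 1 / 4`
the two brackets are the transformed potentials without their `c F` terms.
-/

open scoped Topology

theorem div_rpow_eq_exp_mul_log_sub_log {x y : ℝ} (hx : 0 < x) (hy : 0 < y) (r : ℝ) :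
    (x / y) ^ r = Real.exp (r * (Real.log x - Real.log y)) := by
  rw [Real.rpow_def_of_pos (div_pos hx hy), Real.log_div hx.ne' hy.ne', mul_comm]

section SecondDeriv

variable {𝕜 : Type*} [NontriviallyNormedField 𝕜]

theorem iteratedDeriv_two {E : Type*} [NormedAddCommGroup E] [NormedSpace 𝕜 E] (f : 𝕜 → E) :
    iteratedDeriv 2 f = deriv (deriv f) :=
  iteratedDeriv_eq_iterate

theorem deriv_deriv_const_mul_sub {f g : 𝕜 → 𝕜} {x : 𝕜} (r : 𝕜)
    (hf : ContDiffAt 𝕜 2 f x) (hg : ContDiffAt 𝕜 2 g x) :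
    deriv (deriv fun y => r * (f y - g y)) x
      = r * (deriv (deriv f) x - deriv (deriv g) x) := by
  simp only [← iteratedDeriv_two]
  rw [iteratedDeriv_const_mul_field, iteratedDeriv_fun_sub hf hg]

end SecondDeriv

theorem deriv_deriv_exp_comp {φ : ℝ → ℝ} {x : ℝ} (hφ : ContDiffAt ℝ 2 φ x) :
    deriv (deriv fun y => Real.exp (φ y)) x
      = (deriv (deriv φ) x + deriv φ x ^ 2) * Real.exp (φ x) := by
  have hcomp := iteratedDeriv_comp_two (g := Real.exp) Real.contDiff_exp.contDiffAt hφ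
  simp only [iteratedDeriv_two, Real.deriv_exp, Function.comp_def] at hcomp
  linear_combination hcomp

theorem deriv_deriv_exp_const_mul_sub_add {L M : ℝ → ℝ} {x : ℝ} (r : ℝ)
    (hL : ContDiffAt ℝ 2 L x) (hM : ContDiffAt ℝ 2 M x) :
    deriv (deriv fun y => Real.exp (r * (L y - M y))) x
        + 2 * r * deriv M x * deriv (fun y => Real.exp (r * (L y - M y))) x
      = ((r * deriv (deriv L) x + r ^ 2 * deriv L x ^ 2)
          - (r * deriv (deriv M) x + r ^ 2 * deriv M x ^ 2)) * Real.exp (r * (L x - M x)) := by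
  have hφ : ContDiffAt ℝ 2 (fun y => r * (L y - M y)) x := contDiffAt_const.mul (hL.sub hM)
  have hφ' : deriv (fun y => r * (L y - M y)) x = r * (deriv L x - deriv M x) := by
    rw [deriv_const_mul_field,
      deriv_fun_sub (hL.differentiableAt two_ne_zero) (hM.differentiableAt two_ne_zero)]
  rw [deriv_deriv_exp_comp hφ, deriv_exp (hφ.differentiableAt two_ne_zero), hφ',
    deriv_deriv_const_mul_sub r hL hM]
  ring

theorem deriv_deriv_div_rpow_add {f g : ℝ → ℝ} {x : ℝ} (r : ℝ)
    (hf : ContDiffAt ℝ 2 f x) (hg : ContDiffAt ℝ 2 g x) (hfx : 0 < f x) (hgx : 0 < g x) :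
    deriv (deriv fun y => (f y / g y) ^ r) x
        + 2 * r * deriv (fun y => Real.log (g y)) x * deriv (fun y => (f y / g y) ^ r) x
      = ((r * deriv (deriv fun y => Real.log (f y)) x
            + r ^ 2 * deriv (fun y => Real.log (f y)) x ^ 2)
          - (r * deriv (deriv fun y => Real.log (g y)) x
            + r ^ 2 * deriv (fun y => Real.log (g y)) x ^ 2)) * (f x / g x) ^ r := by
  have hu : (fun y => (f y / g y) ^ r)
      =ᶠ[𝓝 x] fun y => Real.exp (r * (Real.log (f y) - Real.log (g y))) := by
    filter_upwards [hf.continuousAt.eventually_const_lt hfx,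
      hg.continuousAt.eventually_const_lt hgx] with y hfy hgy
    exact div_rpow_eq_exp_mul_log_sub_log hfy hgy r
  rw [hu.deriv.deriv_eq, hu.deriv_eq, div_rpow_eq_exp_mul_log_sub_log hfx hgx]
  exact deriv_deriv_exp_const_mul_sub_add r (hf.log hfx.ne') (hg.log hgx.ne')

theorem stmt3_general {s : Set ℝ} (hs : IsOpen s) {h htil : ℝ → ℝ} (F Ftil : ℝ → ℝ) (c r : ℝ)
    (hh : ContDiffOn ℝ 2 h s) (hht : ContDiffOn ℝ 2 htil s)
    (hpos : ∀ x ∈ s, 0 < h x) (hpost : ∀ x ∈ s, 0 < htil x)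
    (heq : ∀ x ∈ s,
      -c * F x + r ^ 2 * deriv (fun y => Real.log (h y)) x ^ 2
          + r * deriv (deriv fun y => Real.log (h y)) x
        = -c * Ftil x + r ^ 2 * deriv (fun y => Real.log (htil y)) x ^ 2
          + r * deriv (deriv fun y => Real.log (htil y)) x) :
    ContDiffOn ℝ 2 (fun x => (h x / htil x) ^ r) s ∧
    ∀ x ∈ s,
      deriv (deriv fun y => (h y / htil y) ^ r) x
          + 2 * r * deriv (fun y => Real.log (htil y)) x * deriv (fun y => (h y / htil y) ^ r) x
          + c * (Ftil x - F x) * (h x / htil x) ^ r = 0 := by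
  refine ⟨(hh.div hht fun x hx => (hpost x hx).ne').rpow_const_of_ne
    fun x hx => (div_pos (hpos x hx) (hpost x hx)).ne', fun x hx => ?_⟩
  have hode := deriv_deriv_div_rpow_add r
    (hh.contDiffAt (hs.mem_nhds hx)) (hht.contDiffAt (hs.mem_nhds hx))
    (hpos x hx) (hpost x hx)
  linear_combination hode + (h x / htil x) ^ r * heq x hx

/-- **Equality of transformed radial potentials yields an ODE for `u = (h/h̃)^{1/4}`.**
If `h, h̃` are positive `C²` functions on the open interval `I = (a,b)`, `F, F̃` are
continuous on `I` and
`−c·F + (1/16)((log h)')² + (1/4)(log h)'' = −c·F̃ + (1/16)((log h̃)')² + (1/4)(log h̃)''`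
on `I`, then `u = (h/h̃)^{1/4}` is `C²` on `I` and satisfies
`u'' + (1/2)(log h̃)'·u' + c·(F̃ − F)·u = 0` on `I`. -/
theorem stmt3 (a b : ℝ) (h htil F Ftil : ℝ → ℝ) (c : ℝ)
    (hh : ContDiffOn ℝ 2 h (Set.Ioo a b)) (hht : ContDiffOn ℝ 2 htil (Set.Ioo a b))
    (hpos : ∀ x ∈ Set.Ioo a b, 0 < h x) (hpost : ∀ x ∈ Set.Ioo a b, 0 < htil x)
    (hF : ContinuousOn F (Set.Ioo a b)) (hFt : ContinuousOn Ftil (Set.Ioo a b))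
    (heq : ∀ x ∈ Set.Ioo a b,
      -c * F x + (1 / 16) * (deriv (fun y => Real.log (h y)) x) ^ 2
          + (1 / 4) * deriv (deriv (fun y => Real.log (h y))) x
        = -c * Ftil x + (1 / 16) * (deriv (fun y => Real.log (htil y)) x) ^ 2
          + (1 / 4) * deriv (deriv (fun y => Real.log (htil y))) x) :
    ContDiffOn ℝ 2 (fun x => (h x / htil x) ^ ((1 : ℝ) / 4)) (Set.Ioo a b) ∧
    ∀ x ∈ Set.Ioo a b,
      deriv (deriv (fun y => (h y / htil y) ^ ((1 : ℝ) / 4))) x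
          + (1 / 2) * deriv (fun y => Real.log (htil y)) x
              * deriv (fun y => (h y / htil y) ^ ((1 : ℝ) / 4)) x
          + c * (Ftil x - F x) * ((h x / htil x) ^ ((1 : ℝ) / 4)) = 0 := by
  obtain ⟨hu, hode⟩ := stmt3_general isOpen_Ioo F Ftil c (1 / 4) hh hht hpos hpost
    fun x hx => by linear_combination heq x hx
  exact ⟨hu, fun x hx => by linear_combination hode x hx⟩
end

section
/- Let I₁, I₂, I₃ ⊆ ℝ be open intervals and Ω = I₁ × I₂ × I₃. Let s_{i1}, s_{i2}, s_{i3} : I_i → ℝ (i = 1,2,3) be smooth, viewed as functions of the variable xⁱ on Ω, let f_i : I_i → (0,∞) be smooth, and let λ ∈ ℝ. Assume s^{11} and det S are nowhere zero on Ω. Then a smooth function f : Ω → ℂ satisfies the equation Σ_{i=1}^{3} (s^{i1}/det S)·A_i⁰ f = (λ²+1)·f on Ω if and only if it satisfies A₁ f + s_{12}·L f + s_{13}·H f = 0 on Ω. -/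
open scoped ContDiff

/-- Partial derivative in the first variable of `ℝ × ℝ × ℝ`. -/
noncomputable def pd1 (f : ℝ × ℝ × ℝ → ℂ) (p : ℝ × ℝ × ℝ) : ℂ :=
  deriv (fun t => f (t, p.2.1, p.2.2)) p.1

/-- Partial derivative in the second variable of `ℝ × ℝ × ℝ`. -/
noncomputable def pd2 (f : ℝ × ℝ × ℝ → ℂ) (p : ℝ × ℝ × ℝ) : ℂ :=
  deriv (fun t => f (p.1, t, p.2.2)) p.2.1

/-- Partial derivative in the third variable of `ℝ × ℝ × ℝ`. -/
noncomputable def pd3 (f : ℝ × ℝ × ℝ → ℂ) (p : ℝ × ℝ × ℝ) : ℂ :=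
  deriv (fun t => f (p.1, p.2.1, t)) p.2.2

/-- The operator `A_i⁰ u = −∂ᵢ²u + (1/2)·(d/dxⁱ log f_i)·∂ᵢu`. -/
noncomputable def opA0 (pdi : (ℝ × ℝ × ℝ → ℂ) → ℝ × ℝ × ℝ → ℂ) (fi : ℝ → ℝ)
    (xi : ℝ × ℝ × ℝ → ℝ) (f : ℝ × ℝ × ℝ → ℂ) (p : ℝ × ℝ × ℝ) : ℂ :=
  - pdi (pdi f) p + (1 / 2 : ℂ) * (deriv (fun t => Real.log (fi t)) (xi p) : ℂ) * pdi f p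

/-- The operator `A_i u = A_i⁰ u − (λ²+1)·s_{i1}(xⁱ)·u`. -/
noncomputable def opA (pdi : (ℝ × ℝ × ℝ → ℂ) → ℝ × ℝ × ℝ → ℂ) (fi : ℝ → ℝ)
    (xi : ℝ × ℝ × ℝ → ℝ) (si1 : ℝ → ℝ) (lam : ℝ)
    (f : ℝ × ℝ × ℝ → ℂ) (p : ℝ × ℝ × ℝ) : ℂ :=
  opA0 pdi fi xi f p - (((lam ^ 2 + 1) * si1 (xi p) : ℝ) : ℂ) * f p

/-- The signed minor `s^{11} = s₂₂s₃₃ − s₂₃s₃₂`, as a function on `Ω`. -/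
def sm11 (s22 s23 s32 s33 : ℝ → ℝ) (p : ℝ × ℝ × ℝ) : ℝ :=
  s22 p.2.1 * s33 p.2.2 - s23 p.2.1 * s32 p.2.2

/-- The signed minor `s^{21} = s₁₃s₃₂ − s₁₂s₃₃`, as a function on `Ω`. -/
def sm21 (s12 s13 s32 s33 : ℝ → ℝ) (p : ℝ × ℝ × ℝ) : ℝ :=
  s13 p.1 * s32 p.2.2 - s12 p.1 * s33 p.2.2

/-- The signed minor `s^{31} = s₁₂s₂₃ − s₁₃s₂₂`, as a function on `Ω`. -/
def sm31 (s12 s13 s22 s23 : ℝ → ℝ) (p : ℝ × ℝ × ℝ) : ℝ :=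
  s12 p.1 * s23 p.2.1 - s13 p.1 * s22 p.2.1

/-- `det S = s₁₁s^{11} + s₂₁s^{21} + s₃₁s^{31}`, as a function on `Ω`. -/
def sdet (s11 s12 s13 s21 s22 s23 s31 s32 s33 : ℝ → ℝ) (p : ℝ × ℝ × ℝ) : ℝ :=
  s11 p.1 * sm11 s22 s23 s32 s33 p + s21 p.2.1 * sm21 s12 s13 s32 s33 p
    + s31 p.2.2 * sm31 s12 s13 s22 s23 p

/-!
With `x = (-(λ² + 1) f, L f, H f)` and `a = (A₁⁰ f, A₂⁰ f, A₃⁰ f)`, the entries of `a + S x` are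
`A_i f + s_{i2} L f + s_{i3} H f`. By Cramer's rule the operators `L` and `H` are exactly those for
which the entries `i = 2, 3` vanish identically. Pairing `a + S x` with the first row
`(s^{11}, s^{21}, s^{31})` of the adjugate, which annihilates the last two columns of `S` and
pairs with the first one to `det S`, therefore gives
`Σ s^{i1} A_i⁰ f - (λ² + 1) (det S) f = s^{11} (A₁ f + s₁₂ L f + s₁₃ H f)`,
and the coefficients `det S` and `s^{11}` do not vanish.
-/

section Cofactors

variable {n R M : Type*} [Fintype n] [DecidableEq n] [AddCommGroup M]

open scoped Matrix.Module in
theorem sum_adjugate_smul_sum_smul [CommRing R] [Module R M] (S : Matrix n n R) (x : n → M)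
    (j : n) : ∑ i, S.adjugate j i • ∑ k, S i k • x k = S.det • x j := by
  calc ∑ i, S.adjugate j i • ∑ k, S i k • x k
      = ((S.adjugate * S) • x) j := congrFun (smul_smul S.adjugate S x) j
    _ = S.det • x j := by rw [Matrix.adjugate_mul, smul_assoc, one_smul, Pi.smul_apply]

theorem sum_adjugate_smul_add_det_smul [CommRing R] [Module R M] (S : Matrix n n R)
    (a x : n → M) (j : n) (h : ∀ i ≠ j, a i + ∑ k, S i k • x k = 0) :
    ∑ i, S.adjugate j i • a i + S.det • x j = S.adjugate j j • (a j + ∑ k, S j k • x k) := by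
  calc ∑ i, S.adjugate j i • a i + S.det • x j
      = ∑ i, S.adjugate j i • (a i + ∑ k, S i k • x k) := by
        simp only [smul_add, Finset.sum_add_distrib, sum_adjugate_smul_sum_smul]
    _ = S.adjugate j j • (a j + ∑ k, S j k • x k) :=
        Fintype.sum_eq_single j fun i hi => by rw [h i hi, smul_zero]

theorem sum_adjugate_div_det_smul_eq_neg_iff [Field R] [Module R M] (S : Matrix n n R)
    (a x : n → M) (j : n) (h : ∀ i ≠ j, a i + ∑ k, S i k • x k = 0)
    (hminor : S.adjugate j j ≠ 0) (hdet : S.det ≠ 0) :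
    ∑ i, (S.adjugate j i / S.det) • a i = -x j ↔ a j + ∑ k, S j k • x k = 0 := by
  have hclear : S.det • (∑ i, (S.adjugate j i / S.det) • a i + x j) =
      S.adjugate j j • (a j + ∑ k, S j k • x k) := by
    simp only [smul_add, Finset.smul_sum, smul_smul, mul_div_cancel₀ _ hdet,
      ← sum_adjugate_smul_add_det_smul S a x j h]
  rw [← add_eq_zero_iff_eq_neg, ← smul_eq_zero_iff_right hdet, hclear,
    smul_eq_zero_iff_right hminor]

end Cofactors

section ThreeDim

variable {K E : Type*} [Field K] [AddCommGroup E] [Module K E]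

/-- The value of the operator `L = −(s₃₃/s^{11})A₂ + (s₂₃/s^{11})A₃`, where `a` lists the values
of `A₁, A₂, A₃`; matrix indices start at `0` and the minor `s^{i1}` is `S.adjugate 0 (i - 1)`. -/
def stackelL (S : Matrix (Fin 3) (Fin 3) K) (a : Fin 3 → E) : E :=
  -((S 2 2 / S.adjugate 0 0) • a 1) + (S 1 2 / S.adjugate 0 0) • a 2

/-- The value of the operator `H = (s₃₂/s^{11})A₂ − (s₂₂/s^{11})A₃`, with the conventions of
`stackelL`. -/
def stackelH (S : Matrix (Fin 3) (Fin 3) K) (a : Fin 3 → E) : E :=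
  (S 2 1 / S.adjugate 0 0) • a 1 - (S 1 1 / S.adjugate 0 0) • a 2

theorem add_smul_stackelL_add_smul_stackelH_eq_zero (S : Matrix (Fin 3) (Fin 3) K)
    (a : Fin 3 → E) (hminor : S.adjugate 0 0 ≠ 0) {i : Fin 3} (hi : i ≠ 0) :
    a i + S i 1 • stackelL S a + S i 2 • stackelH S a = 0 := by
  have hadj : S.adjugate 0 0 = S 1 1 * S 2 2 - S 1 2 * S 2 1 := by
    simp [Matrix.adjugate_fin_three]
  rw [stackelL, stackelH]
  obtain rfl | rfl : i = 1 ∨ i = 2 := by lia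
  · match_scalars
    · field_simp
      linear_combination hadj
    · field_simp
      ring
  · match_scalars
    · field_simp
      linear_combination hadj
    · field_simp
      ring

/-- The value of the operator `A_i = A_i⁰ − μ s_{i1}` at a function with value `u`, where `a` lists
the values of the `A_i⁰`. -/
def shiftedOp (S : Matrix (Fin 3) (Fin 3) K) (μ : K) (a : Fin 3 → E) (u : E) (i : Fin 3) : E :=
  a i - (μ * S i 0) • u

theorem sum_adjugate_div_det_smul_eq_smul_iff (S : Matrix (Fin 3) (Fin 3) K) (μ : K)
    (a : Fin 3 → E) (u : E) (hminor : S.adjugate 0 0 ≠ 0) (hdet : S.det ≠ 0) :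
    ∑ i, (S.adjugate 0 i / S.det) • a i = μ • u ↔
      shiftedOp S μ a u 0 + S 0 1 • stackelL S (shiftedOp S μ a u)
        + S 0 2 • stackelH S (shiftedOp S μ a u) = 0 := by
  set b := shiftedOp S μ a u
  let x : Fin 3 → E := ![-(μ • u), stackelL S b, stackelH S b]
  have hrow (i : Fin 3) :
      a i + ∑ k, S i k • x k = b i + S i 1 • stackelL S b + S i 2 • stackelH S b := by
    rw [show b i = a i - (μ * S i 0) • u from rfl]
    simp only [x, Fin.sum_univ_three, Matrix.cons_val]
    module
  have hsolve (i : Fin 3) (hi : i ≠ 0) : a i + ∑ k, S i k • x k = 0 :=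
    (hrow i).trans (add_smul_stackelL_add_smul_stackelH_eq_zero S b hminor hi)
  have hx : -x 0 = μ • u := neg_neg _
  rw [← hrow 0, ← hx]
  exact sum_adjugate_div_det_smul_eq_neg_iff S a x 0 hsolve hminor hdet

theorem stmt5_general {X : Type*} (Ω : Set X) (S : X → Matrix (Fin 3) (Fin 3) K) (μ : K)
    (A₀ : Fin 3 → (X → E) → X → E) (f : X → E)
    (hminor : ∀ p ∈ Ω, (S p).adjugate 0 0 ≠ 0) (hdet : ∀ p ∈ Ω, (S p).det ≠ 0) :
    (∀ p ∈ Ω, ∑ i, ((S p).adjugate 0 i / (S p).det) • A₀ i f p = μ • f p) ↔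
      ∀ p ∈ Ω,
        shiftedOp (S p) μ (A₀ · f p) (f p) 0
          + S p 0 1 • stackelL (S p) (shiftedOp (S p) μ (A₀ · f p) (f p))
          + S p 0 2 • stackelH (S p) (shiftedOp (S p) μ (A₀ · f p) (f p)) = 0 :=
  forall₂_congr fun p hp =>
    sum_adjugate_div_det_smul_eq_smul_iff (S p) μ (A₀ · f p) (f p) (hminor p hp) (hdet p hp)

end ThreeDim

/-- The Stäckel matrix `S = (s_{ij}(xⁱ))`, whose `i`-th row depends on the `i`-th variable only, as
a single matrix-valued function: this makes `sdet` its determinant and `sm11`, `sm21`, `sm31` the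
first row of its adjugate. -/
def stackelMatrix (s11 s12 s13 s21 s22 s23 s31 s32 s33 : ℝ → ℝ) (p : ℝ × ℝ × ℝ) :
    Matrix (Fin 3) (Fin 3) ℝ :=
  !![s11 p.1, s12 p.1, s13 p.1;
    s21 p.2.1, s22 p.2.1, s23 p.2.1;
    s31 p.2.2, s32 p.2.2, s33 p.2.2]

section StackelMatrix

variable (s11 s12 s13 s21 s22 s23 s31 s32 s33 : ℝ → ℝ) (p : ℝ × ℝ × ℝ)

theorem stackelMatrix_apply (i j : Fin 3) :
    stackelMatrix s11 s12 s13 s21 s22 s23 s31 s32 s33 p i j =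
      ![![s11 p.1, s12 p.1, s13 p.1], ![s21 p.2.1, s22 p.2.1, s23 p.2.1],
        ![s31 p.2.2, s32 p.2.2, s33 p.2.2]] i j :=
  rfl

theorem adjugate_stackelMatrix_zero :
    (stackelMatrix s11 s12 s13 s21 s22 s23 s31 s32 s33 p).adjugate 0 =
      ![sm11 s22 s23 s32 s33 p, sm21 s12 s13 s32 s33 p, sm31 s12 s13 s22 s23 p] := by
  ext i
  rw [Matrix.adjugate_fin_three]
  fin_cases i
  · rfl
  · exact neg_add_eq_sub _ _
  · rfl

theorem det_stackelMatrix :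
    (stackelMatrix s11 s12 s13 s21 s22 s23 s31 s32 s33 p).det =
      sdet s11 s12 s13 s21 s22 s23 s31 s32 s33 p := by
  simp only [Matrix.det_fin_three, stackelMatrix_apply, Matrix.cons_val, sdet, sm11, sm21, sm31]
  ring

end StackelMatrix

/-- **Lemma 2.1 (separation identity for the shifted Helmholtz equation).**
On `Ω = I₁ × I₂ × I₃`, a smooth `f` satisfies `Σᵢ (s^{i1}/det S)·A_i⁰ f = (λ²+1)·f`
if and only if it satisfies `A₁ f + s₁₂·L f + s₁₃·H f = 0`, where
`L = −(s₃₃/s^{11})A₂ + (s₂₃/s^{11})A₃` and `H = (s₃₂/s^{11})A₂ − (s₂₂/s^{11})A₃`. -/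
theorem stmt5 (a₁ b₁ a₂ b₂ a₃ b₃ lam : ℝ)
    (s11 s12 s13 s21 s22 s23 s31 s32 s33 f1 f2 f3 : ℝ → ℝ)
    (hs1 : ContDiffOn ℝ ∞ s11 (Set.Ioo a₁ b₁) ∧ ContDiffOn ℝ ∞ s12 (Set.Ioo a₁ b₁) ∧
      ContDiffOn ℝ ∞ s13 (Set.Ioo a₁ b₁))
    (hs2 : ContDiffOn ℝ ∞ s21 (Set.Ioo a₂ b₂) ∧ ContDiffOn ℝ ∞ s22 (Set.Ioo a₂ b₂) ∧
      ContDiffOn ℝ ∞ s23 (Set.Ioo a₂ b₂))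
    (hs3 : ContDiffOn ℝ ∞ s31 (Set.Ioo a₃ b₃) ∧ ContDiffOn ℝ ∞ s32 (Set.Ioo a₃ b₃) ∧
      ContDiffOn ℝ ∞ s33 (Set.Ioo a₃ b₃))
    (hf1 : ContDiffOn ℝ ∞ f1 (Set.Ioo a₁ b₁) ∧ ∀ x ∈ Set.Ioo a₁ b₁, 0 < f1 x)
    (hf2 : ContDiffOn ℝ ∞ f2 (Set.Ioo a₂ b₂) ∧ ∀ x ∈ Set.Ioo a₂ b₂, 0 < f2 x)
    (hf3 : ContDiffOn ℝ ∞ f3 (Set.Ioo a₃ b₃) ∧ ∀ x ∈ Set.Ioo a₃ b₃, 0 < f3 x)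
    (hm11 : ∀ p ∈ (Set.Ioo a₁ b₁) ×ˢ (Set.Ioo a₂ b₂) ×ˢ (Set.Ioo a₃ b₃),
      sm11 s22 s23 s32 s33 p ≠ 0)
    (hdet : ∀ p ∈ (Set.Ioo a₁ b₁) ×ˢ (Set.Ioo a₂ b₂) ×ˢ (Set.Ioo a₃ b₃),
      sdet s11 s12 s13 s21 s22 s23 s31 s32 s33 p ≠ 0)
    (f : ℝ × ℝ × ℝ → ℂ)
    (hfsm : ContDiffOn ℝ ∞ f ((Set.Ioo a₁ b₁) ×ˢ (Set.Ioo a₂ b₂) ×ˢ (Set.Ioo a₃ b₃))) :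
    (∀ p ∈ (Set.Ioo a₁ b₁) ×ˢ (Set.Ioo a₂ b₂) ×ˢ (Set.Ioo a₃ b₃),
        ((sm11 s22 s23 s32 s33 p / sdet s11 s12 s13 s21 s22 s23 s31 s32 s33 p : ℝ) : ℂ)
            * opA0 pd1 f1 (fun q => q.1) f p
          + ((sm21 s12 s13 s32 s33 p / sdet s11 s12 s13 s21 s22 s23 s31 s32 s33 p : ℝ) : ℂ)
            * opA0 pd2 f2 (fun q => q.2.1) f p
          + ((sm31 s12 s13 s22 s23 p / sdet s11 s12 s13 s21 s22 s23 s31 s32 s33 p : ℝ) : ℂ)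
            * opA0 pd3 f3 (fun q => q.2.2) f p
          = ((lam ^ 2 + 1 : ℝ) : ℂ) * f p)
    ↔ (∀ p ∈ (Set.Ioo a₁ b₁) ×ˢ (Set.Ioo a₂ b₂) ×ˢ (Set.Ioo a₃ b₃),
        opA pd1 f1 (fun q => q.1) s11 lam f p
          + (s12 p.1 : ℂ) *
              (-((s33 p.2.2 / sm11 s22 s23 s32 s33 p : ℝ) : ℂ)
                  * opA pd2 f2 (fun q => q.2.1) s21 lam f p
                + ((s23 p.2.1 / sm11 s22 s23 s32 s33 p : ℝ) : ℂ)
                  * opA pd3 f3 (fun q => q.2.2) s31 lam f p)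
          + (s13 p.1 : ℂ) *
              (((s32 p.2.2 / sm11 s22 s23 s32 s33 p : ℝ) : ℂ)
                  * opA pd2 f2 (fun q => q.2.1) s21 lam f p
                - ((s22 p.2.1 / sm11 s22 s23 s32 s33 p : ℝ) : ℂ)
                  * opA pd3 f3 (fun q => q.2.2) s31 lam f p)
          = 0) := by
  simpa only [Fin.sum_univ_three, adjugate_stackelMatrix_zero, det_stackelMatrix,
    stackelMatrix_apply, stackelL, stackelH, shiftedOp, opA, Matrix.cons_val, Complex.real_smul,
    neg_mul] using
    stmt5_general _ (stackelMatrix s11 s12 s13 s21 s22 s23 s31 s32 s33) (lam ^ 2 + 1)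
      ![opA0 pd1 f1 (fun q => q.1), opA0 pd2 f2 (fun q => q.2.1), opA0 pd3 f3 (fun q => q.2.2)] f
      (by simpa only [adjugate_stackelMatrix_zero, Matrix.cons_val_zero] using hm11)
      (by simpa only [det_stackelMatrix] using hdet)
end

section
/- Let s_{21}, s_{22}, s_{23} : ℝ → ℝ be smooth functions of x², let s_{31}, s_{32}, s_{33} : ℝ → ℝ be smooth functions of x³, set s^{11}(x²,x³) = s_{22}(x²)s_{33}(x³) − s_{23}(x²)s_{32}(x³) and assume s^{11} is nowhere zero, and let λ ∈ ℝ. Then for every smooth function u : ℝ² → ℂ one has L(H u) = H(L u), i.e. the operators L and H commute. -/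
open scoped ContDiff

/-- Partial derivative `∂₂` (first variable of `ℝ × ℝ`, the angular variable `x²`). -/
noncomputable def qd2 (f : ℝ × ℝ → ℂ) (p : ℝ × ℝ) : ℂ :=
  deriv (fun t => f (t, p.2)) p.1

/-- Partial derivative `∂₃` (second variable of `ℝ × ℝ`, the angular variable `x³`). -/
noncomputable def qd3 (f : ℝ × ℝ → ℂ) (p : ℝ × ℝ) : ℂ :=
  deriv (fun t => f (p.1, t)) p.2

/-- `A₂u = −∂₂²u − (λ²+1)·s₂₁(x²)·u`. -/
noncomputable def opA2 (s21 : ℝ → ℝ) (lam : ℝ) (u : ℝ × ℝ → ℂ) (p : ℝ × ℝ) : ℂ :=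
  - qd2 (qd2 u) p - (((lam ^ 2 + 1) * s21 p.1 : ℝ) : ℂ) * u p

/-- `A₃u = −∂₃²u − (λ²+1)·s₃₁(x³)·u`. -/
noncomputable def opA3 (s31 : ℝ → ℝ) (lam : ℝ) (u : ℝ × ℝ → ℂ) (p : ℝ × ℝ) : ℂ :=
  - qd3 (qd3 u) p - (((lam ^ 2 + 1) * s31 p.2 : ℝ) : ℂ) * u p

/-- `L u = −(s₃₃/s^{11})·A₂u + (s₂₃/s^{11})·A₃u`, with `s^{11} = s₂₂s₃₃ − s₂₃s₃₂`. -/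
noncomputable def opL (s21 s22 s23 s31 s32 s33 : ℝ → ℝ) (lam : ℝ)
    (u : ℝ × ℝ → ℂ) (p : ℝ × ℝ) : ℂ :=
  -((s33 p.2 / (s22 p.1 * s33 p.2 - s23 p.1 * s32 p.2) : ℝ) : ℂ) * opA2 s21 lam u p
    + ((s23 p.1 / (s22 p.1 * s33 p.2 - s23 p.1 * s32 p.2) : ℝ) : ℂ) * opA3 s31 lam u p

/-- `H u = (s₃₂/s^{11})·A₂u − (s₂₂/s^{11})·A₃u`, with `s^{11} = s₂₂s₃₃ − s₂₃s₃₂`. -/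
noncomputable def opH (s21 s22 s23 s31 s32 s33 : ℝ → ℝ) (lam : ℝ)
    (u : ℝ × ℝ → ℂ) (p : ℝ × ℝ) : ℂ :=
  ((s32 p.2 / (s22 p.1 * s33 p.2 - s23 p.1 * s32 p.2) : ℝ) : ℂ) * opA2 s21 lam u p
    - ((s22 p.1 / (s22 p.1 * s33 p.2 - s23 p.1 * s32 p.2) : ℝ) : ℂ) * opA3 s31 lam u p

section Separation

open Matrix

variable {ι S : Type*} [Fintype ι] [Ring S]

lemma sum_mul_sum_mul_lie {b c : ι → S} (hbc : ∀ j l, Commute (b j) (c l)) (P : ι → S) :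
    ∑ j, b j * ∑ l, c l * ⁅P j, P l⁆ = ∑ l, c l * (b ⬝ᵥ P) * P l - ∑ j, b j * (c ⬝ᵥ P) * P j := by
  have hleft : ∑ l, c l * (b ⬝ᵥ P) * P l = ∑ j, ∑ l, b j * (c l * (P j * P l)) := by
    rw [Finset.sum_comm]
    simp only [dotProduct, Finset.mul_sum, Finset.sum_mul, mul_assoc, (hbc _ _).left_comm]
  have hright : ∑ j, b j * (c ⬝ᵥ P) * P j = ∑ j, ∑ l, b j * (c l * (P l * P j)) := by
    simp only [dotProduct, Finset.mul_sum, Finset.sum_mul, mul_assoc]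
  simp only [hleft, hright, Ring.lie_def, Finset.mul_sum, mul_sub, Finset.sum_sub_distrib]

/-- With `A = B *ᵥ P`, the separation `[A i, B k j] = 0` for `i ≠ k` turns `[A i, A k]` into
`∑ j l, B i j * B k l * [P j, P l]`, so the matrix of commutators of `P` vanishes once the
invertible `B` is cancelled on both of its indices. -/
theorem commute_of_commute_mulVec [DecidableEq ι] {B : Matrix ι ι S} (hB : IsUnit B)
    (hBB : ∀ i j k l, Commute (B i j) (B k l)) {P : ι → S}
    (hP : ∀ i k, Commute ((B *ᵥ P) i) ((B *ᵥ P) k))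
    (hBP : ∀ i k, i ≠ k → ∀ j, Commute ((B *ᵥ P) i) (B k j)) (j l : ι) :
    Commute (P j) (P l) := by
  have hpull : ∀ i k, i ≠ k → ∑ l, B k l * (B *ᵥ P) i * P l = (B *ᵥ P) i * (B *ᵥ P) k := by
    intro i k hik
    simp only [← (hBP i k hik _).eq, mul_assoc, ← Finset.mul_sum]
    rfl
  have hlie : ∀ k i, (B *ᵥ fun j => (B *ᵥ fun l => ⁅P j, P l⁆) k) i = 0 := by
    intro k i
    refine (sum_mul_sum_mul_lie (fun j l => hBB i j k l) P).trans (sub_eq_zero.2 ?_)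
    obtain rfl | hik := eq_or_ne i k
    · rfl
    · exact (hpull i k hik).trans ((hP i k).eq.trans (hpull k i hik.symm).symm)
  have hinj : ∀ {x : ι → S}, (∀ i, (B *ᵥ x) i = 0) → x = 0 := fun hx =>
    mulVec_injective_of_isUnit hB ((funext hx).trans (mulVec_zero B).symm)
  have hrow : ∀ k, (B *ᵥ fun l => ⁅P j, P l⁆) k = 0 := fun k => congrFun (hinj (hlie k)) j
  exact commute_iff_lie_eq.2 (congrFun (hinj hrow) l)

end Separation

section Schrodinger

open Matrix

variable {R C : Type*} [CommRing R] [CommRing C] [Algebra R C]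

/-- The Schrödinger operator `-D² - V` attached to a derivation `D` and a potential `V`, which acts
by multiplication. -/
noncomputable def schrodingerOp (D : Derivation R C C) (V : C) : Module.End R C :=
  -(D : Module.End R C) ^ 2 - Algebra.lmul R C V

lemma commute_derivation_lmul {D : Derivation R C C} {f : C} (hf : D f = 0) :
    Commute (D : Module.End R C) (Algebra.lmul R C f) :=
  LinearMap.ext fun g => by simp [hf]

lemma commute_schrodingerOp_lmul {D : Derivation R C C} {f : C} (hf : D f = 0) (V : C) :
    Commute (schrodingerOp D V) (Algebra.lmul R C f) :=
  ((commute_derivation_lmul hf).pow_left 2).neg_left.sub_left ((Commute.all V f).map _)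

lemma commute_schrodingerOp {D₁ D₂ : Derivation R C C} {V₁ V₂ : C}
    (hD : Commute (D₁ : Module.End R C) D₂) (h₁₂ : D₁ V₂ = 0) (h₂₁ : D₂ V₁ = 0) :
    Commute (schrodingerOp D₁ V₁) (schrodingerOp D₂ V₂) := by
  have hsq : Commute (schrodingerOp D₁ V₁) ((D₂ : Module.End R C) ^ 2) :=
    (hD.pow_pow 2 2).neg_left.sub_left ((commute_derivation_lmul h₂₁).pow_left 2).symm
  exact hsq.neg_right.sub_right (commute_schrodingerOp_lmul h₁₂ V₁)

variable {ι : Type*} [Fintype ι] [DecidableEq ι]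

/-- The operators `P j = ∑ i, (B⁻¹)ⱼᵢ (-Dᵢ² - Vᵢ)` obtained by solving the separated equations
`-Dᵢ² - Vᵢ = ∑ j, Bᵢⱼ P j` of a Stäckel matrix `B`. They are meaningful only when `B.det` is a
unit: otherwise `B⁻¹ = 0`. -/
noncomputable def stackelOp (D : ι → Derivation R C C) (V : ι → C) (B : Matrix ι ι C) :
    ι → Module.End R C :=
  B⁻¹.map (Algebra.lmul R C) *ᵥ fun i => schrodingerOp (D i) (V i)

lemma map_lmul_mulVec_stackelOp (D : ι → Derivation R C C) (V : ι → C) {B : Matrix ι ι C}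
    (hB : IsUnit B.det) :
    B.map (Algebra.lmul R C) *ᵥ stackelOp D V B = fun i => schrodingerOp (D i) (V i) := by
  rw [stackelOp, mulVec_mulVec, ← Matrix.map_mul, mul_nonsing_inv B hB,
    Matrix.map_one _ (map_zero _) (map_one _), one_mulVec]

theorem commute_stackelOp {D : ι → Derivation R C C} {V : ι → C} {B : Matrix ι ι C}
    (hB : IsUnit B.det) (hD : ∀ i k, Commute (D i : Module.End R C) (D k))
    (hV : ∀ i k, i ≠ k → D i (V k) = 0) (hDB : ∀ i k, i ≠ k → ∀ j, D i (B k j) = 0) (j l : ι) :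
    Commute (stackelOp D V B j) (stackelOp D V B l) := by
  have hunit : IsUnit (B.map (Algebra.lmul R C)) :=
    (B.isUnit_iff_isUnit_det.2 hB).map (Algebra.lmul R C).toRingHom.mapMatrix
  refine commute_of_commute_mulVec hunit (fun i j k l => (Commute.all (B i j) (B k l)).map
    (Algebra.lmul R C)) ?_ ?_ j l <;> rw [map_lmul_mulVec_stackelOp D V hB]
  · intro i k
    obtain rfl | hik := eq_or_ne i k
    · exact Commute.refl _
    · exact commute_schrodingerOp (hD i k) (hV i k hik) (hV k i hik.symm)
  · exact fun i k hik j => commute_schrodingerOp_lmul (hDB i k hik j) (V i)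

lemma stackelOp_apply (D : ι → Derivation R C C) (V : ι → C) (B : Matrix ι ι C) (j : ι) (f : C) :
    stackelOp D V B j f = ∑ i, B⁻¹ j i * schrodingerOp (D i) (V i) f :=
  LinearMap.sum_apply _ _ f

section FinTwo

variable (D : Fin 2 → Derivation R C C) (V : Fin 2 → C) (B : Matrix (Fin 2) (Fin 2) C) (f : C)

lemma stackelOp_zero_apply :
    stackelOp D V B 0 f = Ring.inverse B.det *
      (B 1 1 * schrodingerOp (D 0) (V 0) f - B 0 1 * schrodingerOp (D 1) (V 1) f) := by
  rw [stackelOp_apply, Fin.sum_univ_two, inv_def, adjugate_fin_two]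
  simp only [Matrix.smul_apply, smul_eq_mul, of_apply, cons_val_zero, cons_val_one, cons_val']
  ring

lemma stackelOp_one_apply :
    stackelOp D V B 1 f = Ring.inverse B.det *
      (B 0 0 * schrodingerOp (D 1) (V 1) f - B 1 0 * schrodingerOp (D 0) (V 0) f) := by
  rw [stackelOp_apply, Fin.sum_univ_two, inv_def, adjugate_fin_two]
  simp only [Matrix.smul_apply, smul_eq_mul, of_apply, cons_val_zero, cons_val_one, cons_val']
  ring

end FinTwo

end Schrodinger

/-- The algebra of smooth functions `E → A`, on which differential operators with smooth
coefficients act as endomorphisms. -/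
def smoothFunctions (𝕜 E A : Type*) [NontriviallyNormedField 𝕜] [NormedAddCommGroup E]
    [NormedSpace 𝕜 E] [NormedRing A] [NormedAlgebra 𝕜 A] : Subalgebra 𝕜 (E → A) where
  carrier := {f | ContDiff 𝕜 ∞ f}
  mul_mem' hf hg := hf.out.mul hg.out
  add_mem' hf hg := hf.out.add hg.out
  algebraMap_mem' c := show ContDiff 𝕜 ∞ fun _ => algebraMap 𝕜 A c from contDiff_const

namespace smoothFunctions

variable {𝕜 E A : Type*} [NontriviallyNormedField 𝕜] [NormedAddCommGroup E] [NormedSpace 𝕜 E]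

lemma contDiff [NormedRing A] [NormedAlgebra 𝕜 A] (f : smoothFunctions 𝕜 E A) :
    ContDiff 𝕜 ∞ f.1 :=
  f.2

section Derivative

variable [NormedCommRing A] [NormedAlgebra 𝕜 A]

lemma differentiableAt (f : smoothFunctions 𝕜 E A) (x : E) : DifferentiableAt 𝕜 f.1 x :=
  (contDiff f).differentiable (by simp) x

lemma contDiff_fderiv (f : smoothFunctions 𝕜 E A) : ContDiff 𝕜 ∞ (fderiv 𝕜 f.1) :=
  (contDiff f).fderiv_right (by simp)

/-- The directional derivative `∂ᵥ` as a derivation of the algebra of smooth functions. -/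
noncomputable def dirDeriv (v : E) :
    Derivation 𝕜 (smoothFunctions 𝕜 E A) (smoothFunctions 𝕜 E A) :=
  Derivation.mk'
    { toFun f := ⟨fun x => fderiv 𝕜 f.1 x v, (contDiff_fderiv f).clm_apply contDiff_const⟩
      map_add' f g := Subtype.ext <| funext fun x =>
        congrArg (· v) (fderiv_add (differentiableAt f x) (differentiableAt g x))
      map_smul' c f := Subtype.ext <| funext fun x =>
        congrArg (· v) (fderiv_const_smul (differentiableAt f x) c) }
    fun f g => Subtype.ext <| funext fun x =>
      congrArg (· v) (fderiv_mul (differentiableAt f x) (differentiableAt g x))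

lemma dirDeriv_apply (v : E) (f : smoothFunctions 𝕜 E A) (x : E) :
    (dirDeriv v f).1 x = fderiv 𝕜 f.1 x v :=
  rfl

lemma dirDeriv_eq_zero {v : E} {f : smoothFunctions 𝕜 E A}
    (hf : ∀ x (t : 𝕜), f.1 (x + t • v) = f.1 x) : dirDeriv v f = 0 := by
  refine Subtype.ext (funext fun x => ?_)
  rw [dirDeriv_apply, ← (differentiableAt f x).lineDeriv_eq_fderiv, lineDeriv]
  simp only [hf, deriv_const]
  rfl

lemma dirDeriv_dirDeriv_apply (v w : E) (f : smoothFunctions 𝕜 E A) (x : E) :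
    (dirDeriv v (dirDeriv w f)).1 x = fderiv 𝕜 (fderiv 𝕜 f.1) x v w := by
  have hf : DifferentiableAt 𝕜 (fderiv 𝕜 f.1) x := (contDiff_fderiv f).differentiable (by simp) x
  have happly : fderiv 𝕜 (fun y => fderiv 𝕜 f.1 y w) x = (fderiv 𝕜 (fderiv 𝕜 f.1) x).flip w := by
    simp [fderiv_clm_apply hf (differentiableAt_const w)]
  exact congrArg (· v) happly

lemma dirDeriv_comm [IsRCLikeNormedField 𝕜] (v w : E) (f : smoothFunctions 𝕜 E A) :
    dirDeriv v (dirDeriv w f) = dirDeriv w (dirDeriv v f) := by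
  refine Subtype.ext (funext fun x => ?_)
  have hsymm : IsSymmSndFDerivAt 𝕜 f.1 x := (contDiff f).contDiffAt.isSymmSndFDerivAt
    (minSmoothness_of_isRCLikeNormedField.trans_le
      (WithTop.coe_le_coe.2 le_top : ((2 : ℕ∞) : ℕ∞ω) ≤ ∞))
  rw [dirDeriv_dirDeriv_apply, dirDeriv_dirDeriv_apply, hsymm.eq v w]

end Derivative

section Field

variable [NormedField A] [NormedAlgebra 𝕜 A]

lemma isUnit_of_forall_ne_zero {f : smoothFunctions 𝕜 E A} (hf : ∀ x, f.1 x ≠ 0) : IsUnit f :=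
  IsUnit.of_mul_eq_one ⟨fun x => (f.1 x)⁻¹, (contDiff f).inv hf⟩
    (Subtype.ext <| funext fun x => mul_inv_cancel₀ (hf x))

lemma ringInverse_apply {f : smoothFunctions 𝕜 E A} (hf : IsUnit f) (x : E) :
    (Ring.inverse f).1 x = (f.1 x)⁻¹ :=
  eq_inv_of_mul_eq_one_left <| congrFun (congrArg Subtype.val (Ring.inverse_mul_cancel f hf)) x

end Field

end smoothFunctions

section Angular

open Matrix smoothFunctions

variable {s21 s22 s23 s31 s32 s33 : ℝ → ℝ}

/-- The smooth function `(x², x³) ↦ s(x²)`. -/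
def ofFst {s : ℝ → ℝ} (hs : ContDiff ℝ ∞ s) : smoothFunctions ℝ (ℝ × ℝ) ℂ :=
  ⟨fun p => (s p.1 : ℂ), Complex.ofRealCLM.contDiff.comp (hs.comp contDiff_fst)⟩

/-- The smooth function `(x², x³) ↦ s(x³)`. -/
def ofSnd {s : ℝ → ℝ} (hs : ContDiff ℝ ∞ s) : smoothFunctions ℝ (ℝ × ℝ) ℂ :=
  ⟨fun p => (s p.2 : ℂ), Complex.ofRealCLM.contDiff.comp (hs.comp contDiff_snd)⟩

/-- The partial derivatives `∂₂` and `∂₃`, indexed from `0`. -/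
noncomputable def angularDeriv :
    Fin 2 → Derivation ℝ (smoothFunctions ℝ (ℝ × ℝ) ℂ) (smoothFunctions ℝ (ℝ × ℝ) ℂ) :=
  ![dirDeriv (1, 0), dirDeriv (0, 1)]

/-- The potentials `(λ² + 1) s₂₁` and `(λ² + 1) s₃₁` of `A₂` and `A₃`. -/
noncomputable def angularPotential (lam : ℝ) (h21 : ContDiff ℝ ∞ s21) (h31 : ContDiff ℝ ∞ s31) :
    Fin 2 → smoothFunctions ℝ (ℝ × ℝ) ℂ :=
  ![(lam ^ 2 + 1) • ofFst h21, (lam ^ 2 + 1) • ofSnd h31]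

/-- The angular block of the Stäckel matrix, with the sign for which the separated equations read
`A₂ = -s₂₂ L - s₂₃ H` and `A₃ = -s₃₂ L - s₃₃ H`. -/
noncomputable def angularMatrix (h22 : ContDiff ℝ ∞ s22) (h23 : ContDiff ℝ ∞ s23)
    (h32 : ContDiff ℝ ∞ s32) (h33 : ContDiff ℝ ∞ s33) :
    Matrix (Fin 2) (Fin 2) (smoothFunctions ℝ (ℝ × ℝ) ℂ) :=
  !![-ofFst h22, -ofFst h23; -ofSnd h32, -ofSnd h33]

lemma dirDeriv_ofFst {s : ℝ → ℝ} (hs : ContDiff ℝ ∞ s) : dirDeriv (0, 1) (ofFst hs) = 0 :=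
  dirDeriv_eq_zero fun x t => by simp [ofFst]

lemma dirDeriv_ofSnd {s : ℝ → ℝ} (hs : ContDiff ℝ ∞ s) : dirDeriv (1, 0) (ofSnd hs) = 0 :=
  dirDeriv_eq_zero fun x t => by simp [ofSnd]

lemma qd2_eq_dirDeriv (f : smoothFunctions ℝ (ℝ × ℝ) ℂ) : qd2 f.1 = (dirDeriv (1, 0) f).1 :=
  funext fun p => (HasFDerivAt.comp_hasDerivAt p.1 (differentiableAt f p).hasFDerivAt
    ((hasDerivAt_id p.1).prodMk (hasDerivAt_const p.1 p.2))).deriv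

lemma qd3_eq_dirDeriv (f : smoothFunctions ℝ (ℝ × ℝ) ℂ) : qd3 f.1 = (dirDeriv (0, 1) f).1 :=
  funext fun p => (HasFDerivAt.comp_hasDerivAt p.2 (differentiableAt f p).hasFDerivAt
    ((hasDerivAt_const p.2 p.1).prodMk (hasDerivAt_id p.2))).deriv

lemma opA2_eq_schrodingerOp (lam : ℝ) {s : ℝ → ℝ} (hs : ContDiff ℝ ∞ s)
    (f : smoothFunctions ℝ (ℝ × ℝ) ℂ) :
    opA2 s lam f.1 = (schrodingerOp (dirDeriv (1, 0)) ((lam ^ 2 + 1) • ofFst hs) f).1 := by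
  funext p
  rw [opA2, qd2_eq_dirDeriv, qd2_eq_dirDeriv]
  simp [schrodingerOp, ofFst, pow_two, mul_assoc]

lemma opA3_eq_schrodingerOp (lam : ℝ) {s : ℝ → ℝ} (hs : ContDiff ℝ ∞ s)
    (f : smoothFunctions ℝ (ℝ × ℝ) ℂ) :
    opA3 s lam f.1 = (schrodingerOp (dirDeriv (0, 1)) ((lam ^ 2 + 1) • ofSnd hs) f).1 := by
  funext p
  rw [opA3, qd3_eq_dirDeriv, qd3_eq_dirDeriv]
  simp [schrodingerOp, ofSnd, pow_two, mul_assoc]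

lemma det_angularMatrix_apply (h22 : ContDiff ℝ ∞ s22) (h23 : ContDiff ℝ ∞ s23)
    (h32 : ContDiff ℝ ∞ s32) (h33 : ContDiff ℝ ∞ s33) (p : ℝ × ℝ) :
    (angularMatrix h22 h23 h32 h33).det.1 p
      = ((s22 p.1 * s33 p.2 - s23 p.1 * s32 p.2 : ℝ) : ℂ) := by
  simp [angularMatrix, det_fin_two_of, ofFst, ofSnd]

section Operators

variable (lam : ℝ) (h21 : ContDiff ℝ ∞ s21) (h22 : ContDiff ℝ ∞ s22) (h23 : ContDiff ℝ ∞ s23)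
  (h31 : ContDiff ℝ ∞ s31) (h32 : ContDiff ℝ ∞ s32) (h33 : ContDiff ℝ ∞ s33)

lemma opL_eq_stackelOp (hB : IsUnit (angularMatrix h22 h23 h32 h33).det)
    (f : smoothFunctions ℝ (ℝ × ℝ) ℂ) :
    opL s21 s22 s23 s31 s32 s33 lam f.1 = (stackelOp angularDeriv (angularPotential lam h21 h31)
      (angularMatrix h22 h23 h32 h33) 0 f).1 := by
  funext p
  have hsolve : (stackelOp angularDeriv (angularPotential lam h21 h31)
      (angularMatrix h22 h23 h32 h33) 0 f).1 p
        = ((s22 p.1 * s33 p.2 - s23 p.1 * s32 p.2 : ℝ) : ℂ)⁻¹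
          * (-(s33 p.2 : ℂ) * opA2 s21 lam f.1 p - -(s23 p.1 : ℂ) * opA3 s31 lam f.1 p) := by
    rw [stackelOp_zero_apply, opA2_eq_schrodingerOp lam h21, opA3_eq_schrodingerOp lam h31,
      ← det_angularMatrix_apply h22 h23 h32 h33, ← ringInverse_apply hB]
    rfl
  rw [hsolve, opL, Complex.ofReal_div, Complex.ofReal_div]
  ring

lemma opH_eq_stackelOp (hB : IsUnit (angularMatrix h22 h23 h32 h33).det)
    (f : smoothFunctions ℝ (ℝ × ℝ) ℂ) :
    opH s21 s22 s23 s31 s32 s33 lam f.1 = (stackelOp angularDeriv (angularPotential lam h21 h31)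
      (angularMatrix h22 h23 h32 h33) 1 f).1 := by
  funext p
  have hsolve : (stackelOp angularDeriv (angularPotential lam h21 h31)
      (angularMatrix h22 h23 h32 h33) 1 f).1 p
        = ((s22 p.1 * s33 p.2 - s23 p.1 * s32 p.2 : ℝ) : ℂ)⁻¹
          * (-(s22 p.1 : ℂ) * opA3 s31 lam f.1 p - -(s32 p.2 : ℂ) * opA2 s21 lam f.1 p) := by
    rw [stackelOp_one_apply, opA2_eq_schrodingerOp lam h21, opA3_eq_schrodingerOp lam h31,
      ← det_angularMatrix_apply h22 h23 h32 h33, ← ringInverse_apply hB]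
    rfl
  rw [hsolve, opH, Complex.ofReal_div, Complex.ofReal_div]
  ring

end Operators

lemma isUnit_det_angularMatrix (h22 : ContDiff ℝ ∞ s22) (h23 : ContDiff ℝ ∞ s23)
    (h32 : ContDiff ℝ ∞ s32) (h33 : ContDiff ℝ ∞ s33)
    (hdet : ∀ p : ℝ × ℝ, s22 p.1 * s33 p.2 - s23 p.1 * s32 p.2 ≠ 0) :
    IsUnit (angularMatrix h22 h23 h32 h33).det :=
  isUnit_of_forall_ne_zero fun p => by
    rw [det_angularMatrix_apply]
    exact Complex.ofReal_ne_zero.2 (hdet p)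

lemma commute_angularDeriv (i k : Fin 2) :
    Commute (angularDeriv i : Module.End ℝ (smoothFunctions ℝ (ℝ × ℝ) ℂ)) (angularDeriv k) := by
  fin_cases i <;> fin_cases k <;> exact LinearMap.ext (dirDeriv_comm _ _)

lemma angularDeriv_angularPotential (lam : ℝ) (h21 : ContDiff ℝ ∞ s21) (h31 : ContDiff ℝ ∞ s31)
    {i k : Fin 2} (hik : i ≠ k) : angularDeriv i (angularPotential lam h21 h31 k) = 0 := by
  fin_cases i <;> fin_cases k <;>
    simp_all [angularDeriv, angularPotential, dirDeriv_ofFst, dirDeriv_ofSnd]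

lemma angularDeriv_angularMatrix (h22 : ContDiff ℝ ∞ s22) (h23 : ContDiff ℝ ∞ s23)
    (h32 : ContDiff ℝ ∞ s32) (h33 : ContDiff ℝ ∞ s33) {i k : Fin 2} (hik : i ≠ k) (j : Fin 2) :
    angularDeriv i (angularMatrix h22 h23 h32 h33 k j) = 0 := by
  fin_cases i <;> fin_cases k <;> fin_cases j <;>
    simp_all [angularDeriv, angularMatrix, dirDeriv_ofFst, dirDeriv_ofSnd]

end Angular

/-- **Lemma 2.3(1).** The angular operators `L` and `H` arising from separation of variables
on a Stäckel manifold commute on smooth functions. -/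
theorem stmt6 (s21 s22 s23 s31 s32 s33 : ℝ → ℝ) (lam : ℝ)
    (h21 : ContDiff ℝ ∞ s21) (h22 : ContDiff ℝ ∞ s22) (h23 : ContDiff ℝ ∞ s23)
    (h31 : ContDiff ℝ ∞ s31) (h32 : ContDiff ℝ ∞ s32) (h33 : ContDiff ℝ ∞ s33)
    (hm11 : ∀ p : ℝ × ℝ, s22 p.1 * s33 p.2 - s23 p.1 * s32 p.2 ≠ 0) :
    ∀ u : ℝ × ℝ → ℂ, ContDiff ℝ ∞ u →
      ∀ p : ℝ × ℝ,
        opL s21 s22 s23 s31 s32 s33 lam (opH s21 s22 s23 s31 s32 s33 lam u) p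
          = opH s21 s22 s23 s31 s32 s33 lam (opL s21 s22 s23 s31 s32 s33 lam u) p := by
  intro u hu p
  have hunit := isUnit_det_angularMatrix h22 h23 h32 h33 hm11
  have hL := opL_eq_stackelOp lam h21 h22 h23 h31 h32 h33 hunit
  have hH := opH_eq_stackelOp lam h21 h22 h23 h31 h32 h33 hunit
  have hcomm := commute_stackelOp hunit commute_angularDeriv
    (fun _ _ => angularDeriv_angularPotential lam h21 h31)
    (fun _ _ => angularDeriv_angularMatrix h22 h23 h32 h33) 0 1
  rw [hH ⟨u, hu⟩, hL ⟨u, hu⟩, hL, hH]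
  exact congrFun (congrArg Subtype.val (LinearMap.congr_fun hcomm.eq ⟨u, hu⟩)) p
end

section
/- Let B, C > 0, let s_{21}, s_{22}, s_{23} : ℝ → ℝ be smooth B-periodic functions of x², let s_{31}, s_{32}, s_{33} : ℝ → ℝ be smooth C-periodic functions of x³, set s^{11}(x²,x³) = s_{22}(x²)s_{33}(x³) − s_{23}(x²)s_{32}(x³) and assume s^{11} > 0 everywhere, and let λ ∈ ℝ. Then for all smooth functions u, v : ℝ² → ℂ that are B-periodic in x² and C-periodic in x³, ∫₀^B ∫₀^C (L u)(x²,x³)·conj(v(x²,x³))·s^{11}(x²,x³) dx³ dx² = ∫₀^B ∫₀^C u(x²,x³)·conj((L v)(x²,x³))·s^{11}(x²,x³) dx³ dx², i.e. L is symmetric for the weighted inner product with weight s^{11}. -/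
open scoped ContDiff
open MeasureTheory

/-
Multiplying by the weight `s^{11}` clears the denominators of `L`, so that
`⟨L u, v⟩_{s^{11}} = ⟨A₃u, v⟩_{s₂₃} - ⟨A₂u, v⟩_{s₃₃}`, where `⟨·, ·⟩_w` is the pairing with
weight `w`. The weight `s₂₃` does not depend on `x³`, the variable in which `A₃` acts, so it factors
out of the inner integral and `A₃` is symmetric for `⟨·, ·⟩_{s₂₃}` because a one-dimensional
Schrödinger operator is symmetric on periodic functions. By Fubini, exchanging the variables turns
this into the symmetry of `A₂` for `⟨·, ·⟩_{s₃₃}`.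
-/

open Function
open scoped ComplexConjugate

theorem periodic_deriv {𝕜 F : Type*} [NontriviallyNormedField 𝕜] [NormedAddCommGroup F]
    [NormedSpace 𝕜 F] {f : 𝕜 → F} {c : 𝕜} (hf : Periodic f c) : Periodic (deriv f) c := by
  intro x
  rw [← deriv_comp_add_const, hf.funext]

section PeriodicIntegration

variable {A : Type*} [NormedRing A] [NormedAlgebra ℝ A] [CompleteSpace A] {f g : ℝ → A} {T : ℝ}

theorem integral_deriv_mul_eq_neg_of_periodic (a : ℝ) (hf : ContDiff ℝ 1 f) (hg : ContDiff ℝ 1 g)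
    (hfT : Periodic f T) (hgT : Periodic g T) :
    ∫ x in a..a + T, deriv f x * g x = -∫ x in a..a + T, f x * deriv g x := by
  rw [intervalIntegral.integral_mul_deriv_eq_deriv_mul
    (fun x _ => (hf.differentiable one_ne_zero x).hasDerivAt)
    (fun x _ => (hg.differentiable one_ne_zero x).hasDerivAt)
    ((hf.continuous_deriv le_rfl).intervalIntegrable _ _)
    ((hg.continuous_deriv le_rfl).intervalIntegrable _ _), hfT a, hgT a, sub_self, zero_sub,
    neg_neg]

theorem integral_deriv_deriv_mul_of_periodic (a : ℝ) (hf : ContDiff ℝ 2 f) (hg : ContDiff ℝ 2 g)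
    (hfT : Periodic f T) (hgT : Periodic g T) :
    ∫ x in a..a + T, deriv (deriv f) x * g x = ∫ x in a..a + T, f x * deriv (deriv g) x := by
  have hf' : ContDiff ℝ 1 (deriv f) := hf.deriv'
  have hg' : ContDiff ℝ 1 (deriv g) := hg.deriv'
  rw [integral_deriv_mul_eq_neg_of_periodic a hf' (hg.of_le one_le_two) (periodic_deriv hfT) hgT,
    integral_deriv_mul_eq_neg_of_periodic a (hf.of_le one_le_two) hg' hfT (periodic_deriv hgT),
    neg_neg]

end PeriodicIntegration

section Schrodinger

variable {𝕜 : Type*} [RCLike 𝕜] {f g : ℝ → 𝕜} {T : ℝ}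

theorem integral_deriv_deriv_mul_conj_of_periodic (a : ℝ) (hf : ContDiff ℝ 2 f)
    (hg : ContDiff ℝ 2 g) (hfT : Periodic f T) (hgT : Periodic g T) :
    ∫ x in a..a + T, deriv (deriv f) x * conj (g x) =
      ∫ x in a..a + T, f x * conj (deriv (deriv g) x) := by
  have hgstar : ContDiff ℝ 2 fun x => star (g x) := (starL' ℝ : 𝕜 ≃L[ℝ] 𝕜).contDiff.comp hg
  have hgstarT : Periodic (fun x => star (g x)) T := hgT.comp star
  simpa only [deriv.star', starRingEnd_apply] using
    integral_deriv_deriv_mul_of_periodic a hf hgstar hfT hgstarT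

theorem integral_schrodinger_mul_conj_of_periodic {q : ℝ → ℝ} (a : ℝ) (hq : Continuous q)
    (hf : ContDiff ℝ 2 f) (hg : ContDiff ℝ 2 g) (hfT : Periodic f T) (hgT : Periodic g T) :
    ∫ x in a..a + T, (-deriv (deriv f) x - q x * f x) * conj (g x) =
      ∫ x in a..a + T, f x * conj (-deriv (deriv g) x - q x * g x) := by
  have hleft : Continuous fun x => deriv (deriv f) x * conj (g x) :=
    (hf.deriv'.continuous_deriv le_rfl).mul (RCLike.continuous_conj.comp hg.continuous)
  have hright : Continuous fun x => f x * conj (deriv (deriv g) x) :=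
    hf.continuous.mul (RCLike.continuous_conj.comp (hg.deriv'.continuous_deriv le_rfl))
  have hpotential : Continuous fun x => q x * f x * conj (g x) :=
    ((RCLike.continuous_ofReal.comp hq).mul hf.continuous).mul
      (RCLike.continuous_conj.comp hg.continuous)
  calc ∫ x in a..a + T, (-deriv (deriv f) x - q x * f x) * conj (g x)
      = ∫ x in a..a + T, -(deriv (deriv f) x * conj (g x) + q x * f x * conj (g x)) := by
        simp only [sub_mul, neg_mul, neg_add']
    _ = ∫ x in a..a + T, -(f x * conj (deriv (deriv g) x) + q x * f x * conj (g x)) := by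
        rw [intervalIntegral.integral_neg, intervalIntegral.integral_neg,
          intervalIntegral.integral_add (hleft.intervalIntegrable _ _)
            (hpotential.intervalIntegrable _ _),
          intervalIntegral.integral_add (hright.intervalIntegrable _ _)
            (hpotential.intervalIntegrable _ _),
          integral_deriv_deriv_mul_conj_of_periodic a hf hg hfT hgT]
    _ = ∫ x in a..a + T, f x * conj (-deriv (deriv g) x - q x * g x) := by
        simp only [map_sub, map_neg, map_mul, RCLike.conj_ofReal]
        exact intervalIntegral.integral_congr fun x _ => by ring

end Schrodinger

theorem integral_integral_sub_of_continuous {E : Type*} [NormedAddCommGroup E] [NormedSpace ℝ E]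
    {F G : ℝ × ℝ → E} (hF : Continuous F) (hG : Continuous G) (a b c d : ℝ) :
    ∫ x in a..b, ∫ y in c..d, (F (x, y) - G (x, y)) =
      (∫ x in a..b, ∫ y in c..d, F (x, y)) - ∫ x in a..b, ∫ y in c..d, G (x, y) := by
  have slice {H : ℝ × ℝ → E} (hH : Continuous H) (x : ℝ) :
      IntervalIntegrable (fun y => H (x, y)) volume c d :=
    (hH.comp (Continuous.prodMk_right x)).intervalIntegrable c d
  have inner {H : ℝ × ℝ → E} (hH : Continuous H) :
      IntervalIntegrable (fun x => ∫ y in c..d, H (x, y)) volume a b :=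
    (intervalIntegral.continuous_parametric_intervalIntegral_of_continuous'
      (f := fun x y => H (x, y)) hH c d).intervalIntegrable a b
  simp only [fun x => intervalIntegral.integral_sub (slice hF x) (slice hG x)]
  exact intervalIntegral.integral_sub (inner hF) (inner hG)

theorem contDiff_qd3 {m n : WithTop ℕ∞} {u : ℝ × ℝ → ℂ} (hu : ContDiff ℝ n u) (hmn : m + 1 ≤ n) :
    ContDiff ℝ m (qd3 u) := by
  have huncurry : ContDiff ℝ n (uncurry fun (p : ℝ × ℝ) t => u (p.1, t)) :=
    hu.comp (contDiff_fst.fst.prodMk contDiff_snd)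
  exact huncurry.fderiv_apply contDiff_snd contDiff_const hmn

theorem continuous_opA3 {q : ℝ → ℝ} (hq : Continuous q) (lam : ℝ) {u : ℝ × ℝ → ℂ}
    (hu : ContDiff ℝ 2 u) : Continuous (opA3 q lam u) := by
  have hqd3 : ContDiff ℝ 1 (qd3 u) := contDiff_qd3 hu (by norm_num)
  have hqd3qd3 : Continuous (qd3 (qd3 u)) := (contDiff_qd3 (m := 0) hqd3 (by norm_num)).continuous
  have huc := hu.continuous
  unfold opA3
  fun_prop

theorem opA3_comp_swap (q : ℝ → ℝ) (lam : ℝ) (u : ℝ × ℝ → ℂ) :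
    opA3 q lam (u ∘ Prod.swap) = opA2 q lam u ∘ Prod.swap :=
  rfl

theorem continuous_opA2 {q : ℝ → ℝ} (hq : Continuous q) (lam : ℝ) {u : ℝ × ℝ → ℂ}
    (hu : ContDiff ℝ 2 u) : Continuous (opA2 q lam u) := by
  have hswap : ContDiff ℝ 2 (Prod.swap : ℝ × ℝ → ℝ × ℝ) := contDiff_snd.prodMk contDiff_fst
  have hA3 := continuous_opA3 hq lam (hu.comp hswap)
  rw [opA3_comp_swap] at hA3
  exact hA3.comp continuous_swap

/-- The pairing `⟨u, v⟩_w` of `L²(𝕋², w dx² dx³)`, the torus being represented by its fundamental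
domain `[0, B] × [0, C]`; conjugate-linear in the second argument. The symmetry of `L` is stated for
`w = s^{11}`, and its proof also uses the weights `s₂₃` and `s₃₃`, which may change sign. -/
noncomputable def weightedPairing (B C : ℝ) (w : ℝ × ℝ → ℝ) (u v : ℝ × ℝ → ℂ) : ℂ :=
  ∫ x in (0 : ℝ)..B, ∫ y in (0 : ℝ)..C, u (x, y) * conj (v (x, y)) * (w (x, y) : ℂ)

section WeightedPairing

variable (B C : ℝ)

theorem conj_weightedPairing (w : ℝ × ℝ → ℝ) (u v : ℝ × ℝ → ℂ) :
    conj (weightedPairing B C w u v) = weightedPairing B C w v u := by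
  simp only [weightedPairing, ← intervalIntegral.intervalIntegral_conj, map_mul, Complex.conj_conj,
    Complex.conj_ofReal, mul_comm (conj (u _))]

variable {w : ℝ × ℝ → ℝ} {u v : ℝ × ℝ → ℂ}

theorem weightedPairing_swap (hw : Continuous w) (hu : Continuous u) (hv : Continuous v) :
    weightedPairing C B (w ∘ Prod.swap) (u ∘ Prod.swap) (v ∘ Prod.swap) =
      weightedPairing B C w u v := by
  have hcont : Continuous fun p : ℝ × ℝ => u p.swap * conj (v p.swap) * (w p.swap : ℂ) := by
    fun_prop
  refine intervalIntegral_intervalIntegral_swap ?_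
  exact (hcont.continuousOn.integrableOn_compact
    (isCompact_uIcc.prod isCompact_uIcc)).mono_set
    (Set.prod_mono Set.uIoc_subset_uIcc Set.uIoc_subset_uIcc)

variable {B C} {q : ℝ → ℝ}

theorem weightedPairing_opA3_left (b : ℝ → ℝ) (hq : Continuous q) (lam : ℝ) (hu : ContDiff ℝ 2 u)
    (hv : ContDiff ℝ 2 v) (huC : ∀ x, Periodic (fun y => u (x, y)) C)
    (hvC : ∀ x, Periodic (fun y => v (x, y)) C) :
    weightedPairing B C (fun p => b p.1) (opA3 q lam u) v =
      weightedPairing B C (fun p => b p.1) u (opA3 q lam v) := by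
  have slice (x : ℝ) : ∫ y in (0 : ℝ)..C, opA3 q lam u (x, y) * conj (v (x, y)) =
      ∫ y in (0 : ℝ)..C, u (x, y) * conj (opA3 q lam v (x, y)) := by
    have hsymm := integral_schrodinger_mul_conj_of_periodic 0 (hq.const_mul (lam ^ 2 + 1))
      (hu.comp (contDiff_prodMk_right x)) (hv.comp (contDiff_prodMk_right x)) (huC x) (hvC x)
    rwa [zero_add] at hsymm
  simp only [weightedPairing, intervalIntegral.integral_mul_const, slice]

theorem weightedPairing_opA2_left {b : ℝ → ℝ} (hb : Continuous b) (hq : Continuous q) (lam : ℝ)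
    (hu : ContDiff ℝ 2 u) (hv : ContDiff ℝ 2 v) (huB : ∀ y, Periodic (fun x => u (x, y)) B)
    (hvB : ∀ y, Periodic (fun x => v (x, y)) B) :
    weightedPairing B C (fun p => b p.2) (opA2 q lam u) v =
      weightedPairing B C (fun p => b p.2) u (opA2 q lam v) := by
  have hw : Continuous fun p : ℝ × ℝ => b p.2 := hb.comp continuous_snd
  have hswap : ContDiff ℝ 2 (Prod.swap : ℝ × ℝ → ℝ × ℝ) := contDiff_snd.prodMk contDiff_fst
  rw [← weightedPairing_swap B C hw (continuous_opA2 hq lam hu) hv.continuous,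
    ← weightedPairing_swap B C hw hu.continuous (continuous_opA2 hq lam hv),
    ← opA3_comp_swap, ← opA3_comp_swap]
  exact weightedPairing_opA3_left b hq lam (hu.comp hswap) (hv.comp hswap) huB hvB

end WeightedPairing

section AngularOperator

variable {B C : ℝ} {s21 s22 s23 s31 s32 s33 : ℝ → ℝ} {u v : ℝ × ℝ → ℂ}

theorem opL_mul_weight (lam : ℝ) (u : ℝ × ℝ → ℂ) {p : ℝ × ℝ}
    (hp : s22 p.1 * s33 p.2 - s23 p.1 * s32 p.2 ≠ 0) :
    opL s21 s22 s23 s31 s32 s33 lam u p * ((s22 p.1 * s33 p.2 - s23 p.1 * s32 p.2 : ℝ) : ℂ) =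
      opA3 s31 lam u p * s23 p.1 - opA2 s21 lam u p * s33 p.2 := by
  have hp' := Complex.ofReal_ne_zero.mpr hp
  rw [opL, Complex.ofReal_div, Complex.ofReal_div]
  field_simp
  ring

theorem weightedPairing_opL_left (lam : ℝ) (h21 : Continuous s21) (h23 : Continuous s23)
    (h31 : Continuous s31) (h33 : Continuous s33)
    (hs : ∀ p : ℝ × ℝ, s22 p.1 * s33 p.2 - s23 p.1 * s32 p.2 ≠ 0)
    (hu : ContDiff ℝ 2 u) (hv : Continuous v) :
    weightedPairing B C (fun p => s22 p.1 * s33 p.2 - s23 p.1 * s32 p.2)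
        (opL s21 s22 s23 s31 s32 s33 lam u) v =
      weightedPairing B C (fun p => s23 p.1) (opA3 s31 lam u) v -
        weightedPairing B C (fun p => s33 p.2) (opA2 s21 lam u) v := by
  have hA2 := continuous_opA2 h21 lam hu
  have hA3 := continuous_opA3 h31 lam hu
  unfold weightedPairing
  rw [← integral_integral_sub_of_continuous
    (F := fun p => opA3 s31 lam u p * conj (v p) * (s23 p.1 : ℂ))
    (G := fun p => opA2 s21 lam u p * conj (v p) * (s33 p.2 : ℂ)) (by fun_prop) (by fun_prop)]
  simp only [mul_right_comm _ (conj (v _)), opL_mul_weight lam u (hs _), sub_mul]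

theorem weightedPairing_opL_right (lam : ℝ) (h21 : Continuous s21) (h23 : Continuous s23)
    (h31 : Continuous s31) (h33 : Continuous s33)
    (hs : ∀ p : ℝ × ℝ, s22 p.1 * s33 p.2 - s23 p.1 * s32 p.2 ≠ 0)
    (hu : Continuous u) (hv : ContDiff ℝ 2 v) :
    weightedPairing B C (fun p => s22 p.1 * s33 p.2 - s23 p.1 * s32 p.2)
        u (opL s21 s22 s23 s31 s32 s33 lam v) =
      weightedPairing B C (fun p => s23 p.1) u (opA3 s31 lam v) -
        weightedPairing B C (fun p => s33 p.2) u (opA2 s21 lam v) := by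
  rw [← conj_weightedPairing, weightedPairing_opL_left lam h21 h23 h31 h33 hs hv hu, map_sub,
    conj_weightedPairing, conj_weightedPairing]

theorem stmt7_general (lam : ℝ) (h21 : Continuous s21) (h23 : Continuous s23)
    (h31 : Continuous s31) (h33 : Continuous s33)
    (hs : ∀ p : ℝ × ℝ, s22 p.1 * s33 p.2 - s23 p.1 * s32 p.2 ≠ 0)
    (hu : ContDiff ℝ 2 u) (hv : ContDiff ℝ 2 v)
    (huB : ∀ y, Periodic (fun x => u (x, y)) B) (huC : ∀ x, Periodic (fun y => u (x, y)) C)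
    (hvB : ∀ y, Periodic (fun x => v (x, y)) B) (hvC : ∀ x, Periodic (fun y => v (x, y)) C) :
    weightedPairing B C (fun p => s22 p.1 * s33 p.2 - s23 p.1 * s32 p.2)
        (opL s21 s22 s23 s31 s32 s33 lam u) v =
      weightedPairing B C (fun p => s22 p.1 * s33 p.2 - s23 p.1 * s32 p.2)
        u (opL s21 s22 s23 s31 s32 s33 lam v) := by
  rw [weightedPairing_opL_left lam h21 h23 h31 h33 hs hu hv.continuous,
    weightedPairing_opA3_left s23 h31 lam hu hv huC hvC,
    weightedPairing_opA2_left h33 h21 lam hu hv huB hvB,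
    weightedPairing_opL_right lam h21 h23 h31 h33 hs hu.continuous hv]

end AngularOperator

/-- **Lemma 2.3(3).** The angular operator `L` is symmetric for the inner product of
`L²(𝕋², s^{11} dx² dx³)` on smooth doubly periodic functions. -/
theorem stmt7 (B C lam : ℝ) (hB : 0 < B) (hC : 0 < C)
    (s21 s22 s23 s31 s32 s33 : ℝ → ℝ)
    (h21 : ContDiff ℝ ∞ s21) (h22 : ContDiff ℝ ∞ s22) (h23 : ContDiff ℝ ∞ s23)
    (h31 : ContDiff ℝ ∞ s31) (h32 : ContDiff ℝ ∞ s32) (h33 : ContDiff ℝ ∞ s33)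
    (hp21 : Function.Periodic s21 B) (hp22 : Function.Periodic s22 B)
    (hp23 : Function.Periodic s23 B)
    (hp31 : Function.Periodic s31 C) (hp32 : Function.Periodic s32 C)
    (hp33 : Function.Periodic s33 C)
    (hm11 : ∀ p : ℝ × ℝ, 0 < s22 p.1 * s33 p.2 - s23 p.1 * s32 p.2)
    (u v : ℝ × ℝ → ℂ) (hu : ContDiff ℝ ∞ u) (hv : ContDiff ℝ ∞ v)
    (huB : ∀ x y : ℝ, u (x + B, y) = u (x, y)) (huC : ∀ x y : ℝ, u (x, y + C) = u (x, y))
    (hvB : ∀ x y : ℝ, v (x + B, y) = v (x, y)) (hvC : ∀ x y : ℝ, v (x, y + C) = v (x, y)) :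
    (∫ x in (0 : ℝ)..B, ∫ y in (0 : ℝ)..C,
        opL s21 s22 s23 s31 s32 s33 lam u (x, y) * (starRingEnd ℂ) (v (x, y))
          * ((s22 x * s33 y - s23 x * s32 y : ℝ) : ℂ))
      = ∫ x in (0 : ℝ)..B, ∫ y in (0 : ℝ)..C,
          u (x, y) * (starRingEnd ℂ) (opL s21 s22 s23 s31 s32 s33 lam v (x, y))
            * ((s22 x * s33 y - s23 x * s32 y : ℝ) : ℂ) := by
  exact stmt7_general lam h21.continuous h23.continuous h31.continuous h33.continuous
    (fun p => (hm11 p).ne') (contDiff_infty.mp hu 2) (contDiff_infty.mp hv 2)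
    (fun y x => huB x y) huC (fun y x => hvB x y) hvC
end

section
/- Let λ ∈ ℝ and B, C > 0. Let s_{21}, s_{22}, s_{23} : ℝ → ℝ be continuous B-periodic with s_{22} < 0 and s_{23} > 0 everywhere, and let s_{31}, s_{32}, s_{33} : ℝ → ℝ be continuous C-periodic with s_{32} > 0 and s_{33} < 0 everywhere. Let μ², ν² ∈ ℝ with μ² ≥ 0, and suppose there exist C² functions v, w : ℝ → ℝ, not identically zero, with v B-periodic, w C-periodic, satisfying −v'' + [−(λ²+1)s_{21} + μ²s_{22} + ν²s_{23}]·v = 0 and −w'' + [−(λ²+1)s_{31} + μ²s_{32} + ν²s_{33}]·w = 0 on ℝ. Then C₁·μ² + D₁ ≤ ν² ≤ C₂·μ² + D₂, where C₁ = min(−s_{32}/s_{33}), D₁ = (λ²+1)·min(s_{31}/s_{33}), C₂ = max(−s_{22}/s_{23}), D₂ = (λ²+1)·max(s_{21}/s_{23}) (minima and maxima taken over one period). -/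
/-!
Along a solution of `y'' = q y` the derivative of `⟪y, y'⟫` is `‖y'‖² + q ‖y‖²`. If `q > 0` on
`[a, b]`, then `⟪y, y'⟫` is monotone there, so a boundary condition that keeps it from growing
between the endpoints makes it constant, and then `y = 0`. Hence the potential of a nontrivial
periodic solution is nonpositive at some point. For the potential `-κ f + μ g + ν h` with
`κ, μ ≥ 0`, dividing by `h` at that point bounds `ν` by `(-g / h) μ + κ (f / h)`, from above if
`h > 0` and from below if `h < 0`.
-/

open Set
open scoped InnerProductSpace

section

variable {E F : Type*} [NormedAddCommGroup E] [InnerProductSpace ℝ E]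
  [NormedAddCommGroup F] [InnerProductSpace ℝ F]

/-- A nontrivial solution `y`, with derivative `y'`, of `y'' = q y` on `[a, b]` whose boundary term
`⟪y, y'⟫` does not increase from `a` to `b`. Periodic, Dirichlet and Neumann boundary conditions
all have this last property. Derivatives at the endpoints are one-sided. -/
structure IsDissipativeSolution (q : ℝ → ℝ) (a b : ℝ) (y y' : ℝ → E) : Prop where
  hasDerivWithinAt : ∀ x ∈ Icc a b, HasDerivWithinAt y (y' x) (Icc a b) x
  hasDerivWithinAt_deriv : ∀ x ∈ Icc a b, HasDerivWithinAt y' (q x • y x) (Icc a b) x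
  inner_right_le_inner_left : ⟪y b, y' b⟫_ℝ ≤ ⟪y a, y' a⟫_ℝ
  exists_ne_zero : ∃ x ∈ Icc a b, y x ≠ 0

namespace IsDissipativeSolution

variable {q f g h : ℝ → ℝ} {a b κ μ ν m n P : ℝ} {y y' : ℝ → E}

theorem of_periodic (hP : 0 < P) (hy : Differentiable ℝ y) (hy' : Differentiable ℝ (deriv y))
    (hper : Function.Periodic y P) (hne : ∃ x, y x ≠ 0)
    (heq : ∀ x, -deriv (deriv y) x + q x • y x = 0) :
    IsDissipativeSolution q 0 P y (deriv y) where
  hasDerivWithinAt x _ := (hy x).hasDerivAt.hasDerivWithinAt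
  hasDerivWithinAt_deriv x _ := by
    rw [← neg_add_eq_zero.mp (heq x)]
    exact (hy' x).hasDerivAt.hasDerivWithinAt
  inner_right_le_inner_left := by
    have hderiv : deriv y P = deriv y 0 := by
      rw [← zero_add P, ← deriv_comp_add_const, funext hper]
    rw [hper.eq, hderiv]
  exists_ne_zero := by
    obtain ⟨x, hx⟩ := hne
    obtain ⟨t, ht, hxt⟩ := hper.exists_mem_Ico₀ hP x
    exact ⟨t, Ico_subset_Icc_self ht, hxt ▸ hx⟩

theorem hasDerivWithinAt_inner (hy : IsDissipativeSolution q a b y y') {x : ℝ}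
    (hx : x ∈ Icc a b) :
    HasDerivWithinAt (fun t => ⟪y t, y' t⟫_ℝ) (‖y' x‖ ^ 2 + q x * ‖y x‖ ^ 2) (Icc a b) x := by
  refine ((hy.hasDerivWithinAt x hx).inner ℝ (hy.hasDerivWithinAt_deriv x hx)).congr_deriv ?_
  rw [real_inner_smul_right, real_inner_self_eq_norm_sq, real_inner_self_eq_norm_sq, add_comm]

theorem exists_potential_nonpos (hy : IsDissipativeSolution q a b y y') (hab : a < b) :
    ∃ x ∈ Icc a b, q x ≤ 0 := by
  by_contra! hq
  have hmono : MonotoneOn (fun t => ⟪y t, y' t⟫_ℝ) (Icc a b) := by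
    refine monotoneOn_of_hasDerivWithinAt_nonneg (convex_Icc a b)
      (fun x hx => (hy.hasDerivWithinAt_inner hx).continuousWithinAt)
      (fun x hx => (hy.hasDerivWithinAt_inner (interior_subset hx)).mono interior_subset)
      fun x hx => ?_
    have := hq x (interior_subset hx)
    positivity
  have hconst : EqOn (fun t => ⟪y t, y' t⟫_ℝ) (fun _ => ⟪y a, y' a⟫_ℝ) (Icc a b) := fun x hx =>
    le_antisymm
      ((hmono hx (right_mem_Icc.2 hab.le) hx.2).trans hy.inner_right_le_inner_left)
      (hmono (left_mem_Icc.2 hab.le) hx hx.1)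
  obtain ⟨x, hx, hne⟩ := hy.exists_ne_zero
  have hzero : ‖y' x‖ ^ 2 + q x * ‖y x‖ ^ 2 = 0 :=
    (uniqueDiffOn_Icc hab x hx).eq_deriv _ (hy.hasDerivWithinAt_inner hx)
      ((hasDerivWithinAt_const x _ _).congr hconst (hconst hx))
  have hpos : 0 < q x * ‖y x‖ ^ 2 := mul_pos (hq x hx) (by positivity)
  linarith [sq_nonneg ‖y' x‖]

theorem le_mul_add_mul
    (hy : IsDissipativeSolution (fun x => -κ * f x + μ * g x + ν * h x) a b y y') (hab : a < b)
    (hκ : 0 ≤ κ) (hμ : 0 ≤ μ) (hh : ∀ x ∈ Icc a b, 0 < h x)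
    (hm : ∀ x ∈ Icc a b, -g x / h x ≤ m) (hn : ∀ x ∈ Icc a b, f x / h x ≤ n) :
    ν ≤ m * μ + κ * n := by
  obtain ⟨x, hx, hpot⟩ := hy.exists_potential_nonpos hab
  calc
    ν ≤ (-g x * μ + κ * f x) / h x := by
      rw [le_div_iff₀ (hh x hx)]
      linarith
    _ = -g x / h x * μ + κ * (f x / h x) := by ring
    _ ≤ m * μ + κ * n := by
      gcongr
      exacts [hm x hx, hn x hx]

theorem mul_add_mul_le
    (hy : IsDissipativeSolution (fun x => -κ * f x + μ * g x + ν * h x) a b y y') (hab : a < b)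
    (hκ : 0 ≤ κ) (hμ : 0 ≤ μ) (hh : ∀ x ∈ Icc a b, h x < 0)
    (hm : ∀ x ∈ Icc a b, m ≤ -g x / h x) (hn : ∀ x ∈ Icc a b, n ≤ f x / h x) :
    m * μ + κ * n ≤ ν := by
  -- The potential is unchanged when both `ν` and `h` change sign.
  have hneg : IsDissipativeSolution (fun x => -κ * f x + μ * g x + -ν * -h x) a b y y' := by
    simpa only [neg_mul_neg] using hy
  have hbound : -ν ≤ -m * μ + κ * -n :=
    hneg.le_mul_add_mul hab hκ hμ (fun x hx => neg_pos.2 (hh x hx))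
      (fun x hx => by simpa only [div_neg] using neg_le_neg (hm x hx))
      (fun x hx => by simpa only [div_neg] using neg_le_neg (hn x hx))
  linarith

end IsDissipativeSolution

section ExtremaOnIcc

variable {f g : ℝ → ℝ} {a b x : ℝ}

theorem div_le_sSup_image_Icc (hf : ContinuousOn f (Icc a b)) (hg : ContinuousOn g (Icc a b))
    (hg0 : ∀ t ∈ Icc a b, g t ≠ 0) (hx : x ∈ Icc a b) :
    f x / g x ≤ sSup ((fun t => f t / g t) '' Icc a b) :=
  le_csSup (isCompact_Icc.bddAbove_image (hf.div hg hg0)) (mem_image_of_mem _ hx)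

theorem sInf_image_Icc_le_div (hf : ContinuousOn f (Icc a b)) (hg : ContinuousOn g (Icc a b))
    (hg0 : ∀ t ∈ Icc a b, g t ≠ 0) (hx : x ∈ Icc a b) :
    sInf ((fun t => f t / g t) '' Icc a b) ≤ f x / g x :=
  csInf_le (isCompact_Icc.bddBelow_image (hf.div hg hg0)) (mem_image_of_mem _ hx)

end ExtremaOnIcc

theorem stmt9_general {a b c d κ μ ν : ℝ} (hab : a < b) (hcd : c < d) (hκ : 0 ≤ κ) (hμ : 0 ≤ μ)
    {s21 s22 s23 s31 s32 s33 : ℝ → ℝ}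
    (hc21 : ContinuousOn s21 (Icc a b)) (hc22 : ContinuousOn s22 (Icc a b))
    (hc23 : ContinuousOn s23 (Icc a b)) (hc31 : ContinuousOn s31 (Icc c d))
    (hc32 : ContinuousOn s32 (Icc c d)) (hc33 : ContinuousOn s33 (Icc c d))
    (h23 : ∀ x ∈ Icc a b, 0 < s23 x) (h33 : ∀ x ∈ Icc c d, s33 x < 0)
    {v v' : ℝ → E} {w w' : ℝ → F}
    (hv : IsDissipativeSolution (fun x => -κ * s21 x + μ * s22 x + ν * s23 x) a b v v')
    (hw : IsDissipativeSolution (fun x => -κ * s31 x + μ * s32 x + ν * s33 x) c d w w') :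
    sInf ((fun t => -s32 t / s33 t) '' Icc c d) * μ
        + κ * sInf ((fun t => s31 t / s33 t) '' Icc c d) ≤ ν ∧
    ν ≤ sSup ((fun t => -s22 t / s23 t) '' Icc a b) * μ
        + κ * sSup ((fun t => s21 t / s23 t) '' Icc a b) := by
  have h23' : ∀ x ∈ Icc a b, s23 x ≠ 0 := fun x hx => (h23 x hx).ne'
  have h33' : ∀ x ∈ Icc c d, s33 x ≠ 0 := fun x hx => (h33 x hx).ne
  exact ⟨hw.mul_add_mul_le hcd hκ hμ h33
      (fun _ => sInf_image_Icc_le_div hc32.neg hc33 h33')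
      (fun _ => sInf_image_Icc_le_div hc31 hc33 h33'),
    hv.le_mul_add_mul hab hκ hμ h23
      (fun _ => div_le_sSup_image_Icc hc22.neg hc23 h23')
      (fun _ => div_le_sSup_image_Icc hc21 hc23 h23')⟩

end

/-- **Lemma 2.6.** The coupled angular momenta `(μ², ν²)` of the separated angular equations
of a Stäckel manifold lie in the cone `C₁μ² + D₁ ≤ ν² ≤ C₂μ² + D₂`, where
`C₁ = min(−s₃₂/s₃₃)`, `D₁ = (λ²+1)·min(s₃₁/s₃₃)`, `C₂ = max(−s₂₂/s₂₃)`,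
`D₂ = (λ²+1)·max(s₂₁/s₂₃)`, the extrema being taken over one period. -/
theorem stmt9 (lam B C : ℝ) (hB : 0 < B) (hC : 0 < C)
    (s21 s22 s23 s31 s32 s33 : ℝ → ℝ)
    (hc21 : Continuous s21) (hc22 : Continuous s22) (hc23 : Continuous s23)
    (hc31 : Continuous s31) (hc32 : Continuous s32) (hc33 : Continuous s33)
    (hp21 : Function.Periodic s21 B) (hp22 : Function.Periodic s22 B)
    (hp23 : Function.Periodic s23 B)
    (hp31 : Function.Periodic s31 C) (hp32 : Function.Periodic s32 C)
    (hp33 : Function.Periodic s33 C)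
    (h22 : ∀ x, s22 x < 0) (h23 : ∀ x, 0 < s23 x)
    (h32 : ∀ x, 0 < s32 x) (h33 : ∀ x, s33 x < 0)
    (mu2 nu2 : ℝ) (hmu2 : 0 ≤ mu2)
    (v w : ℝ → ℝ) (hv : ContDiff ℝ 2 v) (hw : ContDiff ℝ 2 w)
    (hv0 : ∃ x, v x ≠ 0) (hw0 : ∃ x, w x ≠ 0)
    (hvper : Function.Periodic v B) (hwper : Function.Periodic w C)
    (hveq : ∀ x, - deriv (deriv v) x
      + (-(lam ^ 2 + 1) * s21 x + mu2 * s22 x + nu2 * s23 x) * v x = 0)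
    (hweq : ∀ x, - deriv (deriv w) x
      + (-(lam ^ 2 + 1) * s31 x + mu2 * s32 x + nu2 * s33 x) * w x = 0) :
    sInf ((fun t => -s32 t / s33 t) '' Set.Icc 0 C) * mu2
        + (lam ^ 2 + 1) * sInf ((fun t => s31 t / s33 t) '' Set.Icc 0 C) ≤ nu2 ∧
    nu2 ≤ sSup ((fun t => -s22 t / s23 t) '' Set.Icc 0 B) * mu2
        + (lam ^ 2 + 1) * sSup ((fun t => s21 t / s23 t) '' Set.Icc 0 B) := by
  exact stmt9_general hB hC (by positivity) hmu2 hc21.continuousOn hc22.continuousOn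
    hc23.continuousOn hc31.continuousOn hc32.continuousOn hc33.continuousOn
    (fun x _ => h23 x) (fun x _ => h33 x)
    (.of_periodic hB (hv.differentiable two_ne_zero) hv.differentiable_deriv_two hvper hv0 hveq)
    (.of_periodic hC (hw.differentiable two_ne_zero) hw.differentiable_deriv_two hwper hw0 hweq)
end

section
/- Let I ⊆ ℝ be an open interval, let g, ğ : I → ℝ be C¹ with everywhere positive derivative, with images J, J̆ and inverse functions h : J → I, h̆ : J̆ → I. Let p, p̆ : I → ℝ be differentiable and nowhere zero, and let u, v : I → ℂ be differentiable. Define U(X) = p(h(X))·u(h(X)) and V(X) = p(h(X))·v(h(X)) for X ∈ J, and Ŭ(Y) = p̆(h̆(Y))·u(h̆(Y)), V̆(Y) = p̆(h̆(Y))·v(h̆(Y)) for Y ∈ J̆. Then for every X ∈ J, setting Y = ğ(h(X)): W(U,V)(X) = (p(h(X))/p̆(h(X)))² · (ğ∘h)'(X) · W(Ŭ,V̆)(Y), where W(F,G) = F·G' − F'·G denotes the Wronskian. -/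
/-- The Wronskian `W(F,G) = F·G' − F'·G`. -/
noncomputable def Wr (F G : ℝ → ℂ) (X : ℝ) : ℂ := F X * deriv G X - deriv F X * G X

/-!
Multiplying both functions by `p` multiplies their Wronskian by `p²`, and substituting `h` into both
multiplies it by `h'`. Hence the Wronskian of the transformed pair at `g x` is
`p(x)² / g'(x) · W(u,v)(x)`, and comparing this for `(g, p)` and `(ğ, p̆)` leaves the factor
`(p / p̆)² · ğ' / g'`, in which `ğ' / g'` is the derivative of `ğ ∘ h`.

The inverse `h` has derivative `1 / g'` because a continuous injective function on an interval is
strictly monotone, hence open, so that its left inverse is continuous.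
-/

section LeftInverse

open Set Filter Topology

theorem image_mem_nhds_of_continuousOn_of_injOn {α β : Type*}
    [ConditionallyCompleteLinearOrder α] [TopologicalSpace α] [OrderTopology α]
    [DenselyOrdered α] [NoMinOrder α] [NoMaxOrder α]
    [LinearOrder β] [TopologicalSpace β] [OrderTopology β]
    {f : α → β} {s : Set α} {x : α} (hs : s ∈ 𝓝 x) (hf : ContinuousOn f s) (hinj : InjOn f s) :
    f '' s ∈ 𝓝 (f x) := by
  obtain ⟨c, d, -, hcd, hsub⟩ := exists_Icc_mem_subset_of_mem_nhds hs
  obtain ⟨hcx, hxd⟩ : x ∈ Ioo c d := Icc_mem_nhds_iff.mp hcd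
  have hle : c ≤ d := (hcx.trans hxd).le
  have hx : x ∈ Icc c d := ⟨hcx.le, hxd.le⟩
  have hc : c ∈ Icc c d := left_mem_Icc.mpr hle
  have hd : d ∈ Icc c d := right_mem_Icc.mpr hle
  have hcont : ContinuousOn f (Icc c d) := hf.mono hsub
  rcases hcont.strictMonoOn_of_injOn_Icc' hle (hinj.mono hsub) with hmono | hanti
  · exact mem_of_superset (Icc_mem_nhds (hmono hc hx hcx) (hmono hx hd hxd))
      ((intermediate_value_Icc hle hcont).trans (image_mono hsub))
  · exact mem_of_superset (Icc_mem_nhds (hanti hx hd hxd) (hanti hc hx hcx))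
      ((intermediate_value_Icc' hle hcont).trans (image_mono hsub))

theorem continuousAt_of_leftInvOn {α β : Type*}
    [ConditionallyCompleteLinearOrder α] [TopologicalSpace α] [OrderTopology α]
    [DenselyOrdered α] [NoMinOrder α] [NoMaxOrder α]
    [LinearOrder β] [TopologicalSpace β] [OrderTopology β]
    {g : α → β} {h : β → α} {s : Set α} {x : α} (hs : s ∈ 𝓝 x) (hg : ContinuousOn g s)
    (hinv : LeftInvOn h g s) : ContinuousAt h (g x) := by
  intro t ht
  rw [hinv (mem_of_mem_nhds hs)] at ht
  have himage : g '' (s ∩ t) ∈ 𝓝 (g x) :=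
    image_mem_nhds_of_continuousOn_of_injOn (inter_mem hs ht) (hg.mono inter_subset_left)
      (hinv.injOn.mono inter_subset_left)
  rw [mem_map]
  filter_upwards [himage]
  rintro _ ⟨y, ⟨hys, hyt⟩, rfl⟩
  rwa [mem_preimage, hinv hys]

theorem hasDerivAt_of_leftInvOn {g h : ℝ → ℝ} {s : Set ℝ} {x g' : ℝ} (hs : s ∈ 𝓝 x)
    (hcont : ContinuousOn g s) (hinv : LeftInvOn h g s) (hg : HasDerivAt g g' x) (hg' : g' ≠ 0) :
    HasDerivAt h g'⁻¹ (g x) := by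
  have hright : ∀ᶠ y in 𝓝 (g x), g (h y) = y := by
    filter_upwards [image_mem_nhds_of_continuousOn_of_injOn hs hcont hinv.injOn]
    rintro _ ⟨z, hz, rfl⟩
    rw [hinv hz]
  rw [← hinv (mem_of_mem_nhds hs)] at hg
  exact hg.of_local_left_inverse (continuousAt_of_leftInvOn hs hcont hinv) hg' hright

theorem hasDerivAt_of_leftInvOn_of_deriv_ne_zero {g h : ℝ → ℝ} {s : Set ℝ} (hs : IsOpen s)
    (hg' : ∀ x ∈ s, deriv g x ≠ 0) (hinv : LeftInvOn h g s) {x : ℝ} (hx : x ∈ s) :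
    HasDerivAt h (deriv g x)⁻¹ (g x) := by
  have hdiff : ∀ y ∈ s, DifferentiableAt ℝ g y := fun y hy =>
    differentiableAt_of_deriv_ne_zero (hg' y hy)
  exact hasDerivAt_of_leftInvOn (hs.mem_nhds hx)
    (fun y hy => (hdiff y hy).continuousAt.continuousWithinAt) hinv (hdiff x hx).hasDerivAt
    (hg' x hx)

end LeftInverse

section Wronskian

variable {p u v : ℝ → ℂ}

theorem Wr_mul_left {x : ℝ} (hp : DifferentiableAt ℝ p x) (hu : DifferentiableAt ℝ u x)
    (hv : DifferentiableAt ℝ v x) :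
    Wr (fun y => p y * u y) (fun y => p y * v y) x = p x ^ 2 * Wr u v x := by
  simp only [Wr, deriv_fun_mul hp hu, deriv_fun_mul hp hv]
  ring

theorem Wr_comp {h : ℝ → ℝ} {h' X : ℝ} (hh : HasDerivAt h h' X)
    (hu : DifferentiableAt ℝ u (h X)) (hv : DifferentiableAt ℝ v (h X)) :
    Wr (fun Y => u (h Y)) (fun Y => v (h Y)) X = h' * Wr u v (h X) := by
  have hderiv_u : deriv (fun Y => u (h Y)) X = h' * deriv u (h X) :=
    (hu.hasDerivAt.scomp X hh).deriv
  have hderiv_v : deriv (fun Y => v (h Y)) X = h' * deriv v (h X) :=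
    (hv.hasDerivAt.scomp X hh).deriv
  simp only [Wr, hderiv_u, hderiv_v]
  ring

theorem Wr_mul_left_comp_of_eq {h : ℝ → ℝ} {h' x X : ℝ} (hX : h X = x) (hh : HasDerivAt h h' X)
    (hp : DifferentiableAt ℝ p x) (hu : DifferentiableAt ℝ u x) (hv : DifferentiableAt ℝ v x) :
    Wr (fun Y => p (h Y) * u (h Y)) (fun Y => p (h Y) * v (h Y)) X
      = h' * (p x ^ 2 * Wr u v x) := by
  subst hX
  rw [← Wr_mul_left hp hu hv]
  exact Wr_comp hh (hp.fun_mul hu) (hp.fun_mul hv)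

end Wronskian

theorem stmt11_general {s : Set ℝ} (hs : IsOpen s) {g gb h hb : ℝ → ℝ} {p pb u v : ℝ → ℂ}
    (hg' : ∀ x ∈ s, deriv g x ≠ 0) (hgb' : ∀ x ∈ s, deriv gb x ≠ 0)
    (hinv : Set.LeftInvOn h g s) (hbinv : Set.LeftInvOn hb gb s)
    (hp : ∀ x ∈ s, DifferentiableAt ℝ p x)
    (hpb : ∀ x ∈ s, DifferentiableAt ℝ pb x ∧ pb x ≠ 0)
    (hu : ∀ x ∈ s, DifferentiableAt ℝ u x) (hv : ∀ x ∈ s, DifferentiableAt ℝ v x) :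
    ∀ X ∈ g '' s,
      Wr (fun Y => p (h Y) * u (h Y)) (fun Y => p (h Y) * v (h Y)) X
        = (p (h X) / pb (h X)) ^ 2 * ((deriv (fun t => gb (h t)) X : ℝ) : ℂ)
            * Wr (fun Y => pb (hb Y) * u (hb Y)) (fun Y => pb (hb Y) * v (hb Y)) (gb (h X)) := by
  rintro _ ⟨x, hx, rfl⟩
  have hh := hasDerivAt_of_leftInvOn_of_deriv_ne_zero hs hg' hinv hx
  have hhb := hasDerivAt_of_leftInvOn_of_deriv_ne_zero hs hgb' hbinv hx
  have hgb : HasDerivAt gb (deriv gb x) x :=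
    (differentiableAt_of_deriv_ne_zero (hgb' x hx)).hasDerivAt
  have hchange : deriv (fun t => gb (h t)) (g x) = deriv gb x * (deriv g x)⁻¹ :=
    (hgb.comp_of_eq (g x) hh (hinv hx).symm).deriv
  have hgb_ne : ((deriv gb x : ℝ) : ℂ) ≠ 0 := Complex.ofReal_ne_zero.mpr (hgb' x hx)
  have hpb_ne : pb x ≠ 0 := (hpb x hx).2
  rw [hchange, Wr_mul_left_comp_of_eq (hinv hx) hh (hp x hx) (hu x hx) (hv x hx), hinv hx,
    Wr_mul_left_comp_of_eq (hbinv hx) hhb (hpb x hx).1 (hu x hx) (hv x hx)]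
  push_cast
  field_simp

/-- **Transformation of Wronskians under a change of Liouville variable and of weight
function** (unnamed Proposition of Section 2.2). -/
theorem stmt11 (a b : ℝ) (g gb h hb : ℝ → ℝ) (p pb : ℝ → ℝ) (u v : ℝ → ℂ)
    (hg : ContDiffOn ℝ 1 g (Set.Ioo a b)) (hgb : ContDiffOn ℝ 1 gb (Set.Ioo a b))
    (hg' : ∀ x ∈ Set.Ioo a b, 0 < deriv g x) (hgb' : ∀ x ∈ Set.Ioo a b, 0 < deriv gb x)
    (hinv : ∀ x ∈ Set.Ioo a b, h (g x) = x)
    (hbinv : ∀ x ∈ Set.Ioo a b, hb (gb x) = x)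
    (hp : ∀ x ∈ Set.Ioo a b, DifferentiableAt ℝ p x ∧ p x ≠ 0)
    (hpb : ∀ x ∈ Set.Ioo a b, DifferentiableAt ℝ pb x ∧ pb x ≠ 0)
    (hu : ∀ x ∈ Set.Ioo a b, DifferentiableAt ℝ u x)
    (hv : ∀ x ∈ Set.Ioo a b, DifferentiableAt ℝ v x) :
    ∀ X ∈ g '' Set.Ioo a b,
      Wr (fun Y => (p (h Y) : ℂ) * u (h Y)) (fun Y => (p (h Y) : ℂ) * v (h Y)) X
        = (((p (h X) / pb (h X)) ^ 2 : ℝ) : ℂ)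
            * ((deriv (fun t => gb (h t)) X : ℝ) : ℂ)
            * Wr (fun Y => (pb (hb Y) : ℂ) * u (hb Y))
                (fun Y => (pb (hb Y) : ℂ) * v (hb Y)) (gb (h X)) := by
  exact_mod_cast stmt11_general isOpen_Ioo (p := fun x => (p x : ℂ)) (pb := fun x => (pb x : ℂ))
    (fun x hx => (hg' x hx).ne') (fun x hx => (hgb' x hx).ne') hinv hbinv
    (fun x hx => (hp x hx).1.hasDerivAt.ofReal_comp.differentiableAt)
    (fun x hx => ⟨(hpb x hx).1.hasDerivAt.ofReal_comp.differentiableAt,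
      Complex.ofReal_ne_zero.mpr (hpb x hx).2⟩) hu hv
end

section
/- Let A > 0, let f₁ : (0,A) → (0,∞) be differentiable, and let w, ŵ : (0,A) → (0,∞) be differentiable with √w and √ŵ integrable near 0, so that g_w(x) = ∫₀ˣ √(w(t)) dt and g_ŵ(x) = ∫₀ˣ √(ŵ(t)) dt define strictly increasing C¹ bijections onto intervals (0,A_w) and (0,A_ŵ) with inverses h_w and h_ŵ. For differentiable u, v : (0,A) → ℂ define U_w(X) = ((f₁/w)(h_w(X)))^{−1/4}·u(h_w(X)) and V_w(X) = ((f₁/w)(h_w(X)))^{−1/4}·v(h_w(X)) on (0,A_w), and analogously U_ŵ, V_ŵ on (0,A_ŵ). Then for every x ∈ (0,A): W(U_w,V_w)(g_w(x)) = W(U_ŵ,V_ŵ)(g_ŵ(x)), where W(F,G) = F·G' − F'·G. -/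
open MeasureTheory

/-! A common factor `p` multiplies a Wronskian by `p²`, and a substitution `h` multiplies it by
`h'`. For `p = (f₁/w)^{−1/4}` and `h` inverse to a primitive of `√w` one has
`p² h' = (f₁/w)^{−1/2} w^{−1/2} = f₁^{−1/2}`, in which `w` has cancelled: every weight gives
the same Wronskian `f₁^{−1/2} W(u,v)`. -/

open scoped Topology

section Wronskian

variable {F G : ℝ → ℂ}

theorem wr_mul_left {p : ℝ → ℂ} {x : ℝ} (hp : DifferentiableAt ℝ p x)
    (hF : DifferentiableAt ℝ F x) (hG : DifferentiableAt ℝ G x) :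
    Wr (fun y => p y * F y) (fun y => p y * G y) x = p x ^ 2 * Wr F G x := by
  simp only [Wr, deriv_fun_mul hp hF, deriv_fun_mul hp hG]
  ring

theorem wr_comp {h : ℝ → ℝ} {h' X : ℝ} (hF : DifferentiableAt ℝ F (h X))
    (hG : DifferentiableAt ℝ G (h X)) (hh : HasDerivAt h h' X) :
    Wr (F ∘ h) (G ∘ h) X = h' * Wr F G (h X) := by
  simp only [Wr, Function.comp_apply, (hF.hasDerivAt.scomp X hh).deriv,
    (hG.hasDerivAt.scomp X hh).deriv, Complex.real_smul]
  ring

end Wronskian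

theorem hasStrictDerivAt_of_eqOn_integral {s : Set ℝ} (hs : IsOpen s) {a x : ℝ} (hx : x ∈ s)
    {φ g : ℝ → ℝ} (hφ : ContinuousOn φ s) (hint : IntervalIntegrable φ volume a x)
    (hg : s.EqOn g fun y => ∫ t in a..y, φ t) : HasStrictDerivAt g (φ x) x := by
  have hsx : s ∈ 𝓝 x := hs.mem_nhds hx
  exact (intervalIntegral.integral_hasStrictDerivAt_right hint
    (hφ.stronglyMeasurableAtFilter hs x hx) (hφ.continuousAt hsx)).congr_of_eventuallyEq
    (hg.symm.eventuallyEq_of_mem hsx)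

theorem rpow_neg_quarter_sq_mul_inv_sqrt {a b : ℝ} (ha : 0 ≤ a) (hb : 0 < b) :
    ((a / b) ^ (-(1 / 4 : ℝ))) ^ 2 * (√b)⁻¹ = a ^ (-(1 / 2 : ℝ)) := by
  have hsq : ((a / b) ^ (-(1 / 4 : ℝ))) ^ 2 = (a / b) ^ (-(1 / 2 : ℝ)) := by
    rw [← Real.rpow_mul_natCast (div_nonneg ha hb.le)]
    norm_num
  have hsqrt : (√b)⁻¹ = b ^ (-(1 / 2 : ℝ)) := by rw [Real.sqrt_eq_rpow, Real.rpow_neg hb.le]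
  rw [hsq, hsqrt, ← Real.mul_rpow (div_nonneg ha hb.le) hb.le, div_mul_cancel₀ a hb.ne']

/-- The Liouville transform `U_w` of a solution `u`, with weight function `(f₁/w)^{−1/4}`. The
inverse `h` of the change of variables `X = ∫ √w` is a parameter, as a function on all of `ℝ`. -/
noncomputable def liouvilleTransform (f₁ w h : ℝ → ℝ) (u : ℝ → ℂ) (X : ℝ) : ℂ :=
  (((f₁ (h X) / w (h X)) ^ (-(1 / 4 : ℝ)) : ℝ) : ℂ) * u (h X)

theorem wr_liouvilleTransform {f₁ w h : ℝ → ℝ} {u v : ℝ → ℂ} {x X : ℝ} (hX : h X = x)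
    (hf₁ : DifferentiableAt ℝ f₁ x) (hf₁_pos : 0 < f₁ x)
    (hw : DifferentiableAt ℝ w x) (hw_pos : 0 < w x) (hh : HasDerivAt h (√(w x))⁻¹ X)
    (hu : DifferentiableAt ℝ u x) (hv : DifferentiableAt ℝ v x) :
    Wr (liouvilleTransform f₁ w h u) (liouvilleTransform f₁ w h v) X
      = ((f₁ x ^ (-(1 / 2 : ℝ)) : ℝ) : ℂ) * Wr u v x := by
  subst hX
  let p : ℝ → ℂ := fun y => (((f₁ y / w y) ^ (-(1 / 4 : ℝ)) : ℝ) : ℂ)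
  have hp : DifferentiableAt ℝ p (h X) :=
    ((hf₁.div hw hw_pos.ne').rpow_const
      (Or.inl (div_pos hf₁_pos hw_pos).ne')).hasDerivAt.ofReal_comp.differentiableAt
  calc Wr (liouvilleTransform f₁ w h u) (liouvilleTransform f₁ w h v) X
      = ((√(w (h X)))⁻¹ : ℝ) * Wr (fun y => p y * u y) (fun y => p y * v y) (h X) :=
        wr_comp (hp.mul hu) (hp.mul hv) hh
    _ = ((√(w (h X)))⁻¹ : ℝ) * (p (h X) ^ 2 * Wr u v (h X)) := by rw [wr_mul_left hp hu hv]
    _ = ((f₁ (h X) ^ (-(1 / 2 : ℝ)) : ℝ) : ℂ) * Wr u v (h X) := by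
        rw [← rpow_neg_quarter_sq_mul_inv_sqrt hf₁_pos.le hw_pos]
        push_cast
        ring

section Primitive

variable {s : Set ℝ} {f₁ : ℝ → ℝ} {u v : ℝ → ℂ}

theorem wr_liouvilleTransform_integral_sqrt (hs : IsOpen s) {a x : ℝ} (hx : x ∈ s)
    {w g h : ℝ → ℝ} (hf₁ : DifferentiableAt ℝ f₁ x) (hf₁_pos : 0 < f₁ x)
    (hw : DifferentiableOn ℝ w s) (hw_pos : 0 < w x)
    (hint : IntervalIntegrable (fun t => √(w t)) volume a x)
    (hg : s.EqOn g fun y => ∫ t in a..y, √(w t)) (hinv : s.LeftInvOn h g)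
    (hu : DifferentiableAt ℝ u x) (hv : DifferentiableAt ℝ v x) :
    Wr (liouvilleTransform f₁ w h u) (liouvilleTransform f₁ w h v) (g x)
      = ((f₁ x ^ (-(1 / 2 : ℝ)) : ℝ) : ℂ) * Wr u v x := by
  have hsx : s ∈ 𝓝 x := hs.mem_nhds hx
  have hg' : HasStrictDerivAt g (√(w x)) x :=
    hasStrictDerivAt_of_eqOn_integral hs hx hw.continuousOn.sqrt hint hg
  have hh : HasStrictDerivAt h (√(w x))⁻¹ (g x) :=
    hg'.to_local_left_inverse (Real.sqrt_pos.2 hw_pos).ne' (Filter.eventually_of_mem hsx hinv)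
  exact wr_liouvilleTransform (hinv hx) hf₁ hf₁_pos (hw.differentiableAt hsx) hw_pos
    hh.hasDerivAt hu hv

theorem stmt12_general (hs : IsOpen s) {a b : ℝ} {w wb gw gwb ginvw ginvwb : ℝ → ℝ}
    (hf₁ : ∀ x ∈ s, DifferentiableAt ℝ f₁ x ∧ 0 < f₁ x)
    (hw : ∀ x ∈ s, DifferentiableAt ℝ w x ∧ 0 < w x)
    (hwb : ∀ x ∈ s, DifferentiableAt ℝ wb x ∧ 0 < wb x)
    (hwint : ∀ x ∈ s, IntervalIntegrable (fun t => √(w t)) volume a x)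
    (hwbint : ∀ x ∈ s, IntervalIntegrable (fun t => √(wb t)) volume b x)
    (hgw : ∀ x ∈ s, gw x = ∫ t in a..x, √(w t))
    (hgwb : ∀ x ∈ s, gwb x = ∫ t in b..x, √(wb t))
    (hinvw : ∀ x ∈ s, ginvw (gw x) = x) (hinvwb : ∀ x ∈ s, ginvwb (gwb x) = x)
    (hu : ∀ x ∈ s, DifferentiableAt ℝ u x) (hv : ∀ x ∈ s, DifferentiableAt ℝ v x) :
    ∀ x ∈ s,
      Wr (liouvilleTransform f₁ w ginvw u) (liouvilleTransform f₁ w ginvw v) (gw x)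
        = Wr (liouvilleTransform f₁ wb ginvwb u) (liouvilleTransform f₁ wb ginvwb v) (gwb x) := by
  intro x hx
  obtain ⟨hf₁x, hf₁_pos⟩ := hf₁ x hx
  have hw_diff : DifferentiableOn ℝ w s := fun y hy => (hw y hy).1.differentiableWithinAt
  have hwb_diff : DifferentiableOn ℝ wb s := fun y hy => (hwb y hy).1.differentiableWithinAt
  rw [wr_liouvilleTransform_integral_sqrt hs hx hf₁x hf₁_pos hw_diff (hw x hx).2 (hwint x hx)
      hgw hinvw (hu x hx) (hv x hx),
    wr_liouvilleTransform_integral_sqrt hs hx hf₁x hf₁_pos hwb_diff (hwb x hx).2 (hwbint x hx)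
      hgwb hinvwb (hu x hx) (hv x hx)]

end Primitive

/-- **Corollary 2.5.** The Wronskians of the transformed solutions of the radial Stäckel
equation do not depend on the positive weight `w` used in the Liouville change of
variables `X = ∫₀ˣ √w`, with weight function `(f₁/w)^{−1/4}`. -/
theorem stmt12 (A Aw Awb : ℝ) (hA : 0 < A) (hAw : 0 < Aw) (hAwb : 0 < Awb)
    (f1 w wb : ℝ → ℝ)
    (hf1 : ∀ x ∈ Set.Ioo 0 A, DifferentiableAt ℝ f1 x ∧ 0 < f1 x)
    (hwdiff : ∀ x ∈ Set.Ioo 0 A, DifferentiableAt ℝ w x ∧ 0 < w x)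
    (hwbdiff : ∀ x ∈ Set.Ioo 0 A, DifferentiableAt ℝ wb x ∧ 0 < wb x)
    (hwint : ∀ x ∈ Set.Ioo 0 A,
      IntervalIntegrable (fun t => Real.sqrt (w t)) volume 0 x)
    (hwbint : ∀ x ∈ Set.Ioo 0 A,
      IntervalIntegrable (fun t => Real.sqrt (wb t)) volume 0 x)
    (gw gwb ginvw ginvwb : ℝ → ℝ)
    (hgw : ∀ x ∈ Set.Ioo 0 A, gw x = ∫ t in (0 : ℝ)..x, Real.sqrt (w t))
    (hgwb : ∀ x ∈ Set.Ioo 0 A, gwb x = ∫ t in (0 : ℝ)..x, Real.sqrt (wb t))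
    (hgwmono : StrictMonoOn gw (Set.Ioo 0 A)) (hgwbmono : StrictMonoOn gwb (Set.Ioo 0 A))
    (hgwim : gw '' Set.Ioo 0 A = Set.Ioo 0 Aw)
    (hgwbim : gwb '' Set.Ioo 0 A = Set.Ioo 0 Awb)
    (hinvw : ∀ x ∈ Set.Ioo 0 A, ginvw (gw x) = x)
    (hinvwb : ∀ x ∈ Set.Ioo 0 A, ginvwb (gwb x) = x)
    (u v : ℝ → ℂ)
    (hu : ∀ x ∈ Set.Ioo 0 A, DifferentiableAt ℝ u x)
    (hv : ∀ x ∈ Set.Ioo 0 A, DifferentiableAt ℝ v x) :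
    ∀ x ∈ Set.Ioo 0 A,
      Wr (fun X => (((f1 (ginvw X) / w (ginvw X)) ^ (-(1 / 4 : ℝ)) : ℝ) : ℂ) * u (ginvw X))
         (fun X => (((f1 (ginvw X) / w (ginvw X)) ^ (-(1 / 4 : ℝ)) : ℝ) : ℂ) * v (ginvw X))
         (gw x)
      = Wr (fun X => (((f1 (ginvwb X) / wb (ginvwb X)) ^ (-(1 / 4 : ℝ)) : ℝ) : ℂ) * u (ginvwb X))
           (fun X => (((f1 (ginvwb X) / wb (ginvwb X)) ^ (-(1 / 4 : ℝ)) : ℝ) : ℂ) * v (ginvwb X))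
           (gwb x) :=
  stmt12_general isOpen_Ioo hf1 hwdiff hwbdiff hwint hwbint hgw hgwb hinvw hinvwb hu hv
end

section
/- Let A > 0, ε₀ > 0, B, C > 0. Let s_{21}, s_{22}, s_{23} : ℝ → ℝ be continuous B-periodic and s_{31}, s_{32}, s_{33} : ℝ → ℝ continuous C-periodic, with s_{23} − s_{22} = 1, s_{32} − s_{33} = 1, and s^{11}(x²,x³) = s_{22}(x²)s_{33}(x³) − s_{23}(x²)s_{32}(x³) > 0 for all (x²,x³). Let s_{11}, s_{12}, s_{13} : (0,A) → ℝ and suppose there exists K > 0 such that for all x ∈ (0,A/2): |x²·s_{11}(x) − 1| ≤ K(1+|log x|)^{−1−ε₀}, |s_{12}(x) − 1| ≤ K(1+|log x|)^{−1−ε₀}, and |s_{13}(x) − 1| ≤ K(1+|log x|)^{−1−ε₀}. Define s^{21} = s_{13}s_{32} − s_{12}s_{33}, s^{31} = s_{12}s_{23} − s_{13}s_{22}, det S = s_{11}s^{11} + s_{21}s^{21} + s_{31}s^{31} (functions of (x¹,x²,x³)), and assume there exists f₁ : (0,A) → ℝ such that s^{11}·s^{21}·s^{31} = f₁(x¹)·det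 S identically (Robertson condition). Then there exist K' > 0 and x₀ ∈ (0,A) such that for all x ∈ (0,x₀): |f₁(x)/s_{12}(x) − x²| ≤ K'·x²·(1+|log x|)^{−1−ε₀}; in particular (f₁/s_{12})^{1/4}(x) = √x·(1 + O((1+|log x|)^{−1−ε₀})) as x → 0. -/
/-!
Freeze the point `(x², x³)` and put `d = s¹¹`. Multiplying the Robertson condition by `(x¹)²` turns
it into `f₁ · D = (x¹)² · d · s²¹ · s³¹`, where `D = (x¹)² det S`. The first row being
asymptotically hyperbolic, `s²¹ → s₃₂ - s₃₃`, `s³¹ → s₂₃ - s₂₂`, `D → d` and `s₁₂ → 1`, all with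
error `O((1 + |log x¹|)^(-1-ε₀))`. As `d ≠ 0`, the ratio
`f₁ / s₁₂ = (x¹)² · (d · s²¹ · s³¹) / (D · s₁₂)` is `(s₃₂ - s₃₃) (s₂₃ - s₂₂) (x¹)²` up to the same
relative error, and the gauge makes the coefficient `1`.
-/

open Filter Topology Asymptotics

section Rate

variable {α 𝕜 : Type*} [NormedField 𝕜] {l : Filter α} {e u v : α → 𝕜} {u₀ v₀ : 𝕜}

lemma isBigO_mul_sub_mul_const (he : e =O[l] (fun _ => (1 : 𝕜)))
    (hu : (fun x => u x - u₀) =O[l] e) (hv : (fun x => v x - v₀) =O[l] e) :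
    (fun x => u x * v x - u₀ * v₀) =O[l] e := by
  have hu_bdd : u =O[l] (fun _ => (1 : 𝕜)) :=
    ((hu.trans he).add (isBigO_const_one 𝕜 u₀ l)).congr_left fun x => sub_add_cancel _ _
  have huv : (fun x => u x * (v x - v₀)) =O[l] e := by
    simpa only [one_mul] using hu_bdd.mul hv
  exact (huv.add (hu.const_mul_left v₀)).congr_left fun x => by ring

lemma isBigO_inv_sub_inv_const (he : Tendsto e l (𝓝 0)) (hv₀ : v₀ ≠ 0)
    (hv : (fun x => v x - v₀) =O[l] e) :
    (fun x => (v x)⁻¹ - v₀⁻¹) =O[l] e := by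
  have hv_lim : Tendsto v l (𝓝 v₀) := tendsto_sub_nhds_zero_iff.1 (hv.trans_tendsto he)
  have hinv : (fun x => (v x)⁻¹) =O[l] (fun _ => (1 : 𝕜)) := (hv_lim.inv₀ hv₀).isBigO_one 𝕜
  have hprod : (fun x => -v₀⁻¹ * ((v x)⁻¹ * (v x - v₀))) =O[l] e := by
    simpa only [one_mul] using (hinv.mul hv).const_mul_left (-v₀⁻¹)
  refine hprod.congr' ?_ EventuallyEq.rfl
  filter_upwards [hv_lim.eventually_ne hv₀] with x hx
  field_simp
  ring

lemma isBigO_div_sub_div_const (he : Tendsto e l (𝓝 0)) (hv₀ : v₀ ≠ 0)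
    (hu : (fun x => u x - u₀) =O[l] e) (hv : (fun x => v x - v₀) =O[l] e) :
    (fun x => u x / v x - u₀ / v₀) =O[l] e := by
  simpa only [div_eq_mul_inv] using
    isBigO_mul_sub_mul_const (he.isBigO_one 𝕜) hu (isBigO_inv_sub_inv_const he hv₀ hv)

lemma isBigO_mul_const_sub_mul_const_sub (s t : 𝕜)
    (hu : (fun x => u x - u₀) =O[l] e) (hv : (fun x => v x - v₀) =O[l] e) :
    (fun x => u x * s - v x * t - (u₀ * s - v₀ * t)) =O[l] e :=
  ((hu.const_mul_left s).sub (hv.const_mul_left t)).congr_left fun x => by ring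

end Rate

section Stackel

variable {α 𝕜 : Type*} [NormedField 𝕜] {l : Filter α} {e ρ a p q : α → 𝕜} {p₀ q₀ d : 𝕜}

-- In the application `ρ`, `a`, `b`, `f` are `(x¹)²`, `s₁₁`, `s₁₂`, `f₁`, the cofactors of the first
-- column are `d = s¹¹`, `p = s²¹`, `q = s³¹`, and `s`, `t` are `s₂₁`, `s₃₁`.

lemma isBigO_mul_cofactor_expansion_sub (he : Tendsto e l (𝓝 0)) (hρ : ρ =O[l] e) (s t : 𝕜)
    (ha : (fun x => ρ x * a x - 1) =O[l] e)
    (hp : (fun x => p x - p₀) =O[l] e) (hq : (fun x => q x - q₀) =O[l] e) :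
    (fun x => ρ x * (a x * d + s * p x + t * q x) - d) =O[l] e := by
  have he_bdd : e =O[l] (fun _ => (1 : 𝕜)) := he.isBigO_one 𝕜
  have hρ₀ : (fun x => ρ x - 0) =O[l] e := by simpa only [sub_zero] using hρ
  have hρp := (isBigO_mul_sub_mul_const he_bdd hρ₀ hp).const_mul_left s
  have hρq := (isBigO_mul_sub_mul_const he_bdd hρ₀ hq).const_mul_left t
  exact ((ha.const_mul_left d).add (hρp.add hρq)).congr_left fun x => by ring

lemma isBigO_div_sub_of_robertson {b f : α → 𝕜} {s t : 𝕜}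
    (he : Tendsto e l (𝓝 0)) (hρ : ρ =O[l] e) (hd : d ≠ 0)
    (ha : (fun x => ρ x * a x - 1) =O[l] e) (hb : (fun x => b x - 1) =O[l] e)
    (hp : (fun x => p x - p₀) =O[l] e) (hq : (fun x => q x - q₀) =O[l] e)
    (hRob : ∀ᶠ x in l, d * p x * q x = f x * (a x * d + s * p x + t * q x)) :
    (fun x => f x / b x - p₀ * q₀ * ρ x) =O[l] (fun x => ρ x * e x) := by
  set D : α → 𝕜 := fun x => ρ x * (a x * d + s * p x + t * q x)
  have he_bdd : e =O[l] (fun _ => (1 : 𝕜)) := he.isBigO_one 𝕜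
  have hD : (fun x => D x - d) =O[l] e := isBigO_mul_cofactor_expansion_sub he hρ s t ha hp hq
  have hD_lim : Tendsto D l (𝓝 d) := tendsto_sub_nhds_zero_iff.1 (hD.trans_tendsto he)
  have hnum : (fun x => d * (p x * q x) - d * (p₀ * q₀)) =O[l] e := by
    simpa only [mul_sub] using (isBigO_mul_sub_mul_const he_bdd hp hq).const_mul_left d
  have hquot : (fun x => d * (p x * q x) / (D x * b x) - d * (p₀ * q₀) / (d * 1)) =O[l] e :=
    isBigO_div_sub_div_const he (mul_ne_zero hd one_ne_zero) hnum
      (isBigO_mul_sub_mul_const he_bdd hD hb)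
  refine ((isBigO_refl ρ l).mul hquot).congr' ?_ EventuallyEq.rfl
  filter_upwards [hRob, hD_lim.eventually_ne hd] with x hx hDx
  have hf : f x = ρ x * (d * (p x * q x)) / D x :=
    (eq_div_iff hDx).2 (by simp only [D]; linear_combination -ρ x * hx)
  rw [hf, mul_one, mul_div_cancel_left₀ _ hd, mul_sub, mul_comm (ρ x) (p₀ * q₀), div_div,
    mul_div_assoc (ρ x)]

end Stackel

section LogWeight

lemma tendsto_abs_log_nhdsGT_zero : Tendsto (fun x => |Real.log x|) (𝓝[>] 0) atTop :=
  tendsto_abs_atBot_atTop.comp Real.tendsto_log_nhdsGT_zero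

lemma isBigO_rpow_one_add_abs_log_rpow_neg_nhdsGT_zero {r s : ℝ} (hr : 0 ≤ r) (hs : 0 < s) :
    (fun x : ℝ => x ^ s) =O[𝓝[>] 0] (fun x => (1 + |Real.log x|) ^ (-r)) := by
  have hlog : (fun x => 1 + |Real.log x|) =O[𝓝[>] 0] (fun x => |Real.log x|) :=
    ((isLittleO_const_id_atTop 1).comp_tendsto tendsto_abs_log_nhdsGT_zero).isBigO.add
      (isBigO_refl _ _)
  have hpow : (fun x => (1 + |Real.log x|) ^ r) =O[𝓝[>] 0] (fun x => x ^ (-s)) :=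
    (hlog.rpow hr (.of_forall fun x => abs_nonneg _)).trans
      (isLittleO_abs_log_rpow_rpow_nhdsGT_zero r (neg_lt_zero.2 hs)).isBigO
  refine (hpow.inv_rev (.of_forall fun x hx => absurd hx (by positivity))).congr' ?_ ?_
  · filter_upwards [self_mem_nhdsWithin] with x hx
    rw [← Real.rpow_neg (Set.mem_Ioi.1 hx).le, neg_neg]
  · exact .of_forall fun x => (Real.rpow_neg (by positivity) r).symm

lemma tendsto_one_add_abs_log_rpow_neg_nhdsGT_zero {r : ℝ} (hr : 0 < r) :
    Tendsto (fun x : ℝ => (1 + |Real.log x|) ^ (-r)) (𝓝[>] 0) (𝓝 0) :=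
  (tendsto_rpow_neg_atTop hr).comp <|
    tendsto_atTop_add_const_left _ 1 tendsto_abs_log_nhdsGT_zero

end LogWeight

section RightNeighborhood

variable {α : Type*} [LinearOrder α] [TopologicalSpace α] [OrderTopology α] {a b : α} {u v : α → ℝ}

lemma isBigO_nhdsGT_of_abs_le {K : ℝ} (hab : a < b) (h : ∀ x ∈ Set.Ioo a b, |u x| ≤ K * v x) :
    u =O[𝓝[>] a] v := by
  refine IsBigO.of_bound |K| ?_
  filter_upwards [Ioo_mem_nhdsGT hab] with x hx
  exact (h x hx).trans ((le_abs_self _).trans_eq (abs_mul _ _))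

lemma exists_forall_Ioo_abs_le_of_isBigO_nhdsGT [DenselyOrdered α] (h : u =O[𝓝[>] a] v)
    (hab : a < b) :
    ∃ K > 0, ∃ c ∈ Set.Ioo a b, ∀ x ∈ Set.Ioo a c, |u x| ≤ K * |v x| := by
  obtain ⟨K, hK, hbound⟩ := h.exists_pos
  obtain ⟨m, ham, hmb⟩ := exists_between hab
  obtain ⟨c, hc, hsub⟩ := (mem_nhdsGT_iff_exists_mem_Ioc_Ioo_subset ham).1 hbound.bound
  exact ⟨K, hK, c, ⟨hc.1, hc.2.trans_lt hmb⟩, fun x hx => hsub hx⟩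

end RightNeighborhood

theorem stmt13_general {A r K : ℝ} (hA : 0 < A) (hr : 0 < r)
    {s21 s22 s23 s31 s32 s33 : ℝ} (hm11 : s22 * s33 - s23 * s32 ≠ 0) {s11 s12 s13 f1 : ℝ → ℝ}
    (hb11 : ∀ x ∈ Set.Ioo 0 (A / 2), |x ^ 2 * s11 x - 1| ≤ K * (1 + |Real.log x|) ^ (-r))
    (hb12 : ∀ x ∈ Set.Ioo 0 (A / 2), |s12 x - 1| ≤ K * (1 + |Real.log x|) ^ (-r))
    (hb13 : ∀ x ∈ Set.Ioo 0 (A / 2), |s13 x - 1| ≤ K * (1 + |Real.log x|) ^ (-r))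
    (hRob : ∀ x ∈ Set.Ioo 0 A,
      (s22 * s33 - s23 * s32) * (s13 x * s32 - s12 x * s33) * (s12 x * s23 - s13 x * s22)
        = f1 x * (s11 x * (s22 * s33 - s23 * s32) + s21 * (s13 x * s32 - s12 x * s33)
            + s31 * (s12 x * s23 - s13 x * s22))) :
    ∃ K' > 0, ∃ x₀ ∈ Set.Ioo 0 A, ∀ x ∈ Set.Ioo 0 x₀,
      |f1 x / s12 x - (s32 - s33) * (s23 - s22) * x ^ 2|
        ≤ K' * x ^ 2 * (1 + |Real.log x|) ^ (-r) := by
  have hweight : ∀ x : ℝ, 0 ≤ (1 + |Real.log x|) ^ (-r) := fun x => by positivity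
  have hsq : (fun x : ℝ => x ^ 2) =O[𝓝[>] 0] (fun x => (1 + |Real.log x|) ^ (-r)) := by
    simpa only [Real.rpow_two] using isBigO_rpow_one_add_abs_log_rpow_neg_nhdsGT_zero hr.le two_pos
  have h11 := isBigO_nhdsGT_of_abs_le (half_pos hA) hb11
  have h12 := isBigO_nhdsGT_of_abs_le (half_pos hA) hb12
  have h13 := isBigO_nhdsGT_of_abs_le (half_pos hA) hb13
  have hs21 := isBigO_mul_const_sub_mul_const_sub s32 s33 h13 h12
  have hs31 := isBigO_mul_const_sub_mul_const_sub s23 s22 h12 h13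
  have hratio := isBigO_div_sub_of_robertson (tendsto_one_add_abs_log_rpow_neg_nhdsGT_zero hr)
    hsq hm11 h11 h12 hs21 hs31 (eventually_of_mem (Ioo_mem_nhdsGT hA) hRob)
  simpa only [one_mul, mul_assoc, abs_mul, abs_sq, abs_of_nonneg (hweight _)] using
    exists_forall_Ioo_abs_le_of_isBigO_nhdsGT hratio hA

/-- **Lemma 2.8.** Under the asymptotically hyperbolic structure at the end `{x¹ = 0}` of a
Stäckel manifold in the gauge `s₂₃ − s₂₂ = 1`, `s₃₂ − s₃₃ = 1`, the Robertson function `f₁`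
satisfies `f₁/s₁₂ = x²·(1 + O((1+|log x|)^{−1−ε₀}))` as `x → 0`. -/
theorem stmt13 (A ε₀ B C : ℝ) (hA : 0 < A) (hε : 0 < ε₀) (hB : 0 < B) (hC : 0 < C)
    (s21 s22 s23 s31 s32 s33 : ℝ → ℝ)
    (hc21 : Continuous s21) (hc22 : Continuous s22) (hc23 : Continuous s23)
    (hc31 : Continuous s31) (hc32 : Continuous s32) (hc33 : Continuous s33)
    (hp21 : Function.Periodic s21 B) (hp22 : Function.Periodic s22 B)
    (hp23 : Function.Periodic s23 B)
    (hp31 : Function.Periodic s31 C) (hp32 : Function.Periodic s32 C)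
    (hp33 : Function.Periodic s33 C)
    (hgauge2 : ∀ x, s23 x - s22 x = 1) (hgauge3 : ∀ x, s32 x - s33 x = 1)
    (hm11 : ∀ x2 x3 : ℝ, 0 < s22 x2 * s33 x3 - s23 x2 * s32 x3)
    (s11 s12 s13 : ℝ → ℝ) (K : ℝ) (hK : 0 < K)
    (hb11 : ∀ x ∈ Set.Ioo 0 (A / 2),
      |x ^ 2 * s11 x - 1| ≤ K * (1 + |Real.log x|) ^ (-(1 + ε₀)))
    (hb12 : ∀ x ∈ Set.Ioo 0 (A / 2),
      |s12 x - 1| ≤ K * (1 + |Real.log x|) ^ (-(1 + ε₀)))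
    (hb13 : ∀ x ∈ Set.Ioo 0 (A / 2),
      |s13 x - 1| ≤ K * (1 + |Real.log x|) ^ (-(1 + ε₀)))
    (f1 : ℝ → ℝ)
    (hRob : ∀ x1 ∈ Set.Ioo 0 A, ∀ x2 x3 : ℝ,
      (s22 x2 * s33 x3 - s23 x2 * s32 x3) * (s13 x1 * s32 x3 - s12 x1 * s33 x3)
          * (s12 x1 * s23 x2 - s13 x1 * s22 x2)
        = f1 x1 * (s11 x1 * (s22 x2 * s33 x3 - s23 x2 * s32 x3)
            + s21 x2 * (s13 x1 * s32 x3 - s12 x1 * s33 x3)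
            + s31 x3 * (s12 x1 * s23 x2 - s13 x1 * s22 x2))) :
    ∃ K' > 0, ∃ x₀ ∈ Set.Ioo 0 A, ∀ x ∈ Set.Ioo 0 x₀,
      |f1 x / s12 x - x ^ 2| ≤ K' * x ^ 2 * (1 + |Real.log x|) ^ (-(1 + ε₀)) := by
  simpa only [hgauge2, hgauge3, one_mul] using
    stmt13_general hA (by linarith) (hm11 0 0).ne' hb11 hb12 hb13 fun x hx => hRob x hx 0 0
end

section
/- For every ε > 0 and every X₀ ∈ (0,1) there exists a constant C > 0 such that for all r ≥ e: ∫₀^{X₀} 1/( t·(1+|log t|)^{1+ε}·(1+r·t) ) dt ≤ C·(log r)^{−ε}. -/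
open MeasureTheory

/-!
In the variable `x = log t` the integral over all of `(0, ∞)` becomes
`∫ (1 + |x|) ^ (-(1 + ε)) / (1 + r * exp x) dx`. Cut the line at `x = -a`: to the left the factor
`1 + r * exp x` is discarded, and the tail of the power contributes `(1 + a) ^ (-ε) / ε`; to the
right the power is discarded, and `1 / (1 + r * exp x) ≤ exp (-x) / r` contributes `exp a / r`.
With `a = log r / 2` the second contribution is `r ^ (-1/2)`, which decays faster than any power of
`log r`.
-/

open Real Set

section ChangeOfVariables

variable {E : Type*} [NormedAddCommGroup E] [NormedSpace ℝ E]

lemma integral_Ioi_zero_comp_log (g : ℝ → E) :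
    ∫ t in Ioi 0, t⁻¹ • g (log t) = ∫ x, g x := by
  rw [← range_exp, ← image_univ, integral_image_eq_integral_abs_deriv_smul MeasurableSet.univ
    (fun x _ ↦ (hasDerivAt_exp x).hasDerivWithinAt) exp_injective.injOn]
  simp [smul_smul]

lemma integrableOn_Ioi_zero_comp_log (g : ℝ → E) :
    IntegrableOn (fun t ↦ t⁻¹ • g (log t)) (Ioi 0) ↔ Integrable g := by
  rw [← range_exp, ← image_univ, integrableOn_image_iff_integrableOn_abs_deriv_smul
    MeasurableSet.univ (fun x _ ↦ (hasDerivAt_exp x).hasDerivWithinAt) exp_injective.injOn]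
  simp [smul_smul]

end ChangeOfVariables

lemma integral_add_rpow_Ioi_of_lt {a c m : ℝ} (ha : a < -1) (hc : -m < c) :
    ∫ x in Ioi c, (x + m) ^ a = -(c + m) ^ (a + 1) / (a + 1) := by
  have h_shift := (measurePreserving_add_right volume m).setIntegral_preimage_emb
    (measurableEmbedding_addRight m) (· ^ a) (Ioi (c + m))
  rw [preimage_add_const_Ioi, add_sub_cancel_right] at h_shift
  rw [h_shift, integral_Ioi_rpow_of_lt ha (by linarith)]

lemma integral_Iic_neg_one_add_abs_rpow {ε a : ℝ} (hε : 0 < ε) (ha : 0 ≤ a) :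
    ∫ x in Iic (-a), (1 + |x|) ^ (-(1 + ε)) = (1 + a) ^ (-ε) / ε := by
  calc ∫ x in Iic (-a), (1 + |x|) ^ (-(1 + ε))
      = ∫ x in Ioi a, (1 + |x|) ^ (-(1 + ε)) := by
        rw [← integral_comp_neg_Ioi]; simp only [abs_neg]
    _ = ∫ x in Ioi a, (x + 1) ^ (-(1 + ε)) :=
        setIntegral_congr_fun measurableSet_Ioi fun x hx ↦ by
          simp only [abs_of_pos (ha.trans_lt hx), add_comm 1 x]
    _ = -(a + 1) ^ (-(1 + ε) + 1) / (-(1 + ε) + 1) :=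
        integral_add_rpow_Ioi_of_lt (by linarith) (by linarith)
    _ = (1 + a) ^ (-ε) / ε := by
        rw [show -(1 + ε) + 1 = -ε by ring, neg_div_neg_eq, add_comm a]

lemma integrable_one_add_abs_rpow {ε : ℝ} (hε : 0 < ε) :
    Integrable fun x : ℝ ↦ (1 + |x|) ^ (-(1 + ε)) := by
  simpa only [norm_eq_abs] using
    integrable_one_add_norm (E := ℝ) (r := 1 + ε) (by simpa using hε)

/-- The integrand of the estimate in the variable `x = log t`, with the Jacobian `t` absorbing the
singular factor `1 / t`. -/
noncomputable def logKernel (ε r x : ℝ) : ℝ :=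
  (1 + |x|) ^ (-(1 + ε)) / (1 + r * exp x)

section LogKernel

variable {ε r a : ℝ}

lemma inv_smul_logKernel_log {t : ℝ} (ht : 0 < t) :
    t⁻¹ • logKernel ε r (log t) = 1 / (t * (1 + |log t|) ^ (1 + ε) * (1 + r * t)) := by
  rw [logKernel, exp_log ht, rpow_neg (by positivity), smul_eq_mul]
  simp only [div_eq_mul_inv, mul_inv, one_mul, mul_assoc]

lemma logKernel_nonneg (hr : 0 ≤ r) (x : ℝ) : 0 ≤ logKernel ε r x := by
  unfold logKernel; positivity

lemma logKernel_le_one_add_abs_rpow (hr : 0 ≤ r) (x : ℝ) :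
    logKernel ε r x ≤ (1 + |x|) ^ (-(1 + ε)) :=
  div_le_self (by positivity) (le_add_of_nonneg_right (by positivity))

lemma logKernel_le_exp_neg_div (hε : -1 ≤ ε) (hr : 0 < r) (x : ℝ) :
    logKernel ε r x ≤ exp (-x) / r := by
  have h_pow : (1 + |x|) ^ (-(1 + ε)) ≤ 1 :=
    rpow_le_one_of_one_le_of_nonpos (by simp) (by linarith)
  calc logKernel ε r x ≤ 1 / (r * exp x) := by
        unfold logKernel; gcongr; linarith
    _ = exp (-x) / r := by rw [exp_neg]; field_simp

lemma integrable_logKernel (hε : 0 < ε) (hr : 0 ≤ r) : Integrable (logKernel ε r) := by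
  refine (integrable_one_add_abs_rpow hε).mono' ?_ (.of_forall fun x ↦ ?_)
  · unfold logKernel
    exact Measurable.aestronglyMeasurable (by fun_prop)
  · rw [norm_of_nonneg (logKernel_nonneg hr x)]
    exact logKernel_le_one_add_abs_rpow hr x

lemma integral_logKernel_le_of_cutoff (hε : 0 < ε) (hr : 0 < r) (ha : 0 ≤ a) :
    ∫ x, logKernel ε r x ≤ (1 + a) ^ (-ε) / ε + exp a / r := by
  have h_int := integrable_logKernel hε hr.le
  have h_left : ∫ x in Iic (-a), logKernel ε r x ≤ (1 + a) ^ (-ε) / ε := by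
    rw [← integral_Iic_neg_one_add_abs_rpow hε ha]
    exact setIntegral_mono h_int.integrableOn (integrable_one_add_abs_rpow hε).integrableOn
      (logKernel_le_one_add_abs_rpow hr.le)
  have h_right : ∫ x in Ioi (-a), logKernel ε r x ≤ exp a / r := by
    calc ∫ x in Ioi (-a), logKernel ε r x ≤ ∫ x in Ioi (-a), exp (-x) / r :=
          setIntegral_mono h_int.integrableOn ((integrableOn_exp_neg_Ioi _).div_const r)
            (logKernel_le_exp_neg_div (by linarith) hr)
      _ = exp a / r := by rw [integral_div, integral_exp_neg_Ioi, neg_neg]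
  rw [← intervalIntegral.integral_Iic_add_Ioi h_int.integrableOn h_int.integrableOn]
  exact add_le_add h_left h_right

end LogKernel

lemma rpow_neg_le_log_rpow_neg {ε δ r : ℝ} (hε : 0 < ε) (hδ : 0 < δ) (hr : 1 < r) :
    r ^ (-δ) ≤ (ε / δ) ^ ε * log r ^ (-ε) := by
  have hr0 : 0 < r := zero_lt_one.trans hr
  have h_log_pos : 0 < log r := log_pos hr
  have h_log_le : log r ≤ ε / δ * r ^ (δ / ε) :=
    (log_le_rpow_div hr0.le (div_pos hδ hε)).trans_eq (by field_simp)
  have h_log_rpow_le : log r ^ ε ≤ (ε / δ) ^ ε * r ^ δ := by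
    calc log r ^ ε ≤ (ε / δ * r ^ (δ / ε)) ^ ε := by gcongr
      _ = (ε / δ) ^ ε * r ^ δ := by
        rw [mul_rpow (by positivity) (by positivity), ← rpow_mul hr0.le, div_mul_cancel₀ δ hε.ne']
  rw [rpow_neg hr0.le, rpow_neg h_log_pos.le, ← div_eq_mul_inv, inv_eq_one_div,
    div_le_div_iff₀ (by positivity) (by positivity), one_mul]
  exact h_log_rpow_le

lemma integral_logKernel_le_log_rpow {ε r : ℝ} (hε : 0 < ε) (hr : 1 < r) :
    ∫ x, logKernel ε r x ≤ (2 ^ ε / ε + (2 * ε) ^ ε) * log r ^ (-ε) := by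
  have hr0 : 0 < r := zero_lt_one.trans hr
  have h_log_pos : 0 < log r := log_pos hr
  have h_tail : (1 + log r / 2) ^ (-ε) ≤ 2 ^ ε * log r ^ (-ε) := by
    calc (1 + log r / 2) ^ (-ε) ≤ (log r / 2) ^ (-ε) :=
          rpow_le_rpow_of_nonpos (by positivity) (by linarith) (by linarith)
      _ = 2 ^ ε * log r ^ (-ε) := by
        rw [div_rpow h_log_pos.le zero_le_two, rpow_neg zero_le_two, div_inv_eq_mul, mul_comm]
  have h_exp : exp (log r / 2) / r ≤ (2 * ε) ^ ε * log r ^ (-ε) := by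
    calc exp (log r / 2) / r = r ^ (-(1 / 2 : ℝ)) := by
          rw [rpow_def_of_pos hr0]
          nth_rw 2 [← exp_log hr0]
          rw [← exp_sub]
          ring_nf
      _ ≤ (ε / (1 / 2)) ^ ε * log r ^ (-ε) := rpow_neg_le_log_rpow_neg hε one_half_pos hr
      _ = (2 * ε) ^ ε * log r ^ (-ε) := by rw [div_div_eq_mul_div, div_one, mul_comm ε]
  calc ∫ x, logKernel ε r x ≤ (1 + log r / 2) ^ (-ε) / ε + exp (log r / 2) / r :=
        integral_logKernel_le_of_cutoff hε hr0 (by positivity)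
    _ ≤ 2 ^ ε * log r ^ (-ε) / ε + (2 * ε) ^ ε * log r ^ (-ε) := by gcongr
    _ = (2 ^ ε / ε + (2 * ε) ^ ε) * log r ^ (-ε) := by ring

lemma intervalIntegral_le_setIntegral_Ioi {f : ℝ → ℝ} {a b : ℝ} (hab : a ≤ b)
    (hf : IntegrableOn f (Ioi a)) (hf_nonneg : ∀ t ∈ Ioi a, 0 ≤ f t) :
    ∫ t in a..b, f t ≤ ∫ t in Ioi a, f t := by
  rw [intervalIntegral.integral_of_le hab]
  exact setIntegral_mono_set hf (ae_restrict_of_forall_mem measurableSet_Ioi hf_nonneg)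
    Ioc_subset_Ioi_self.eventuallyLE

theorem stmt15_general (ε : ℝ) (hε : 0 < ε) :
    ∃ C > 0, ∀ r : ℝ, 1 < r → ∀ X₀ : ℝ, 0 ≤ X₀ →
      (∫ t in (0 : ℝ)..X₀,
          1 / (t * (1 + |Real.log t|) ^ (1 + ε) * (1 + r * t)))
        ≤ C * Real.log r ^ (-ε) := by
  refine ⟨2 ^ ε / ε + (2 * ε) ^ ε, by positivity, fun r hr X₀ hX₀ ↦ ?_⟩
  have hr0 : 0 ≤ r := by linarith
  calc ∫ t in (0 : ℝ)..X₀, 1 / (t * (1 + |log t|) ^ (1 + ε) * (1 + r * t))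
      = ∫ t in (0 : ℝ)..X₀, t⁻¹ • logKernel ε r (log t) :=
        intervalIntegral.integral_congr_uIoo fun t ht ↦
          (inv_smul_logKernel_log (by simpa [hX₀] using ht.1)).symm
    _ ≤ ∫ t in Ioi 0, t⁻¹ • logKernel ε r (log t) :=
        intervalIntegral_le_setIntegral_Ioi hX₀
          ((integrableOn_Ioi_zero_comp_log _).2 (integrable_logKernel hε hr0))
          fun t ht ↦ smul_nonneg (inv_nonneg.2 ht.le) (logKernel_nonneg hr0 _)
    _ = ∫ x, logKernel ε r x := integral_Ioi_zero_comp_log _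
    _ ≤ (2 ^ ε / ε + (2 * ε) ^ ε) * log r ^ (-ε) := integral_logKernel_le_log_rpow hε hr

/-- **The integral estimate (4.2) of Step 1 of the proof of Lemma 4.3.** For every `ε > 0`
and `X₀ ∈ (0,1)` there is `C > 0` such that for all `r ≥ e`,
`∫₀^{X₀} dt/(t·(1+|log t|)^{1+ε}·(1+rt)) ≤ C·(log r)^{−ε}`. -/
theorem stmt15 (ε : ℝ) (hε : 0 < ε) (X₀ : ℝ) (hX₀ : X₀ ∈ Set.Ioo (0 : ℝ) 1) :
    ∃ C > 0, ∀ r : ℝ, Real.exp 1 ≤ r →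
      (∫ t in (0 : ℝ)..X₀,
          1 / (t * (1 + |Real.log t|) ^ (1 + ε) * (1 + r * t)))
        ≤ C * Real.log r ^ (-ε) := by
  obtain ⟨C, hC, h_bound⟩ := stmt15_general ε hε
  exact ⟨C, hC, fun r hr ↦ h_bound r ((one_lt_exp_iff.2 one_pos).trans_le hr) X₀ hX₀.1.le⟩
end

section
/- Let 0 < α₁ < α₂ and 0 < e₁ ≤ e₂. Let G : [α₁², α₂²] → (0,∞) be differentiable with e₁ ≤ G'(s) ≤ e₂ for all s ∈ [α₁², α₂²]. For m ∈ ℕ and θ ∈ [α₁, α₂] set μ_m(θ) = 2·m·π·G(θ²). Then there exist δ > 0 and M ∈ ℕ such that for all m ≥ M and all θ₁, θ₂ ∈ [α₁, α₂]: |μ_{m+1}(θ₂) − μ_m(θ₁)| + |θ₂·μ_{m+1}(θ₂) − θ₁·μ_m(θ₁)| ≥ δ. -/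
/-!
Let `P = (u a, u a • x)` and `Q = (v b, v b • y)`, where `a = f x`, `b = f y` and `0 ≤ u ≤ v`. If
`P` and `Q` are at distance `ε`, then `u ‖y - x‖ = O(ε)`, because
`u a • (y - x) = (v b • y - u a • x) - (v b - u a) • y` and `a` is bounded below. A Lipschitz bound
on `f` then gives `u |b - a| = O(ε)`, so in the first coordinate `v b - u a = (v - u) b + u (b - a)`
a small `ε` cannot cancel the gap `(v - u) b`.
-/

open Set
open scoped NNReal

theorem norm_mul_norm_sub_le {𝕜 E : Type*} [NormedField 𝕜] [SeminormedAddCommGroup E]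
    [NormedSpace 𝕜 E] (p q : 𝕜) (x y : E) :
    ‖p‖ * ‖y - x‖ ≤ ‖q • y - p • x‖ + ‖q - p‖ * ‖y‖ :=
  calc ‖p‖ * ‖y - x‖ = ‖p • (y - x)‖ := (norm_smul _ _).symm
    _ = ‖(q • y - p • x) - (q - p) • y‖ := by congr 1; module
    _ ≤ ‖q • y - p • x‖ + ‖(q - p) • y‖ := norm_sub_le _ _
    _ = ‖q • y - p • x‖ + ‖q - p‖ * ‖y‖ := by rw [norm_smul]

theorem sub_mul_le_abs_sub_add {R : Type*} [CommRing R] [LinearOrder R] [IsStrictOrderedRing R]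
    {u : R} (hu : 0 ≤ u) (v a b : R) :
    (v - u) * b ≤ |v * b - u * a| + u * |b - a| :=
  calc (v - u) * b = (v * b - u * a) + u * -(b - a) := by ring
    _ ≤ |v * b - u * a| + u * |b - a| := by
      gcongr
      exacts [le_abs_self _, neg_le_abs _]

section Separation

variable {E : Type*} [SeminormedAddCommGroup E] [NormedSpace ℝ E]

theorem div_le_abs_sub_add_norm_sub {x y : E} {a b c u v K R : ℝ} (hu : 0 ≤ u) (huv : u ≤ v)
    (hc : 0 < c) (ha : c ≤ a) (hb : c ≤ b) (hK : 0 ≤ K) (hab : |b - a| ≤ K * ‖y - x‖)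
    (hy : ‖y‖ ≤ R) :
    (v - u) * c ^ 2 / (c + K * (1 + R)) ≤
      |v * b - u * a| + ‖(v * b) • y - (u * a) • x‖ := by
  have hR : 0 ≤ R := (norm_nonneg y).trans hy
  set X := |v * b - u * a|
  set Y := ‖(v * b) • y - (u * a) • x‖
  have hX : 0 ≤ X := abs_nonneg _
  have hY : 0 ≤ Y := norm_nonneg _
  have parameters_close : u * c * ‖y - x‖ ≤ Y + X * R :=
    calc u * c * ‖y - x‖ ≤ |u * a| * ‖y - x‖ := by
          gcongr
          exact (mul_le_mul_of_nonneg_left ha hu).trans (le_abs_self _)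
      _ ≤ Y + X * ‖y‖ := norm_mul_norm_sub_le (u * a) (v * b) x y
      _ ≤ Y + X * R := by gcongr
  have gap_le : (v - u) * c ≤ X + u * (K * ‖y - x‖) :=
    calc (v - u) * c ≤ (v - u) * b := mul_le_mul_of_nonneg_left hb (sub_nonneg.2 huv)
      _ ≤ X + u * |b - a| := sub_mul_le_abs_sub_add hu v a b
      _ ≤ X + u * (K * ‖y - x‖) := by gcongr
  rw [div_le_iff₀ (by positivity)]
  calc (v - u) * c ^ 2 = c * ((v - u) * c) := by ring
    _ ≤ c * (X + u * (K * ‖y - x‖)) := by gcongr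
    _ = c * X + K * (u * c * ‖y - x‖) := by ring
    _ ≤ c * X + K * (Y + X * R) := by gcongr
    _ ≤ (X + Y) * (c + K * (1 + R)) := by
      linarith [mul_nonneg hc.le hY, mul_nonneg hK hX, mul_nonneg hK (mul_nonneg hY hR)]

theorem stmt16_general {S : Set E} {f : E → ℝ} {K : ℝ≥0} (hS : IsCompact S)
    (hf : LipschitzOnWith K f S) (hpos : ∀ x ∈ S, 0 < f x) :
    ∃ δ > 0, ∀ t : ℝ, 0 ≤ t → ∀ x ∈ S, ∀ y ∈ S,
      δ ≤ |2 * (t + 1) * Real.pi * f y - 2 * t * Real.pi * f x|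
        + ‖(2 * (t + 1) * Real.pi * f y) • y - (2 * t * Real.pi * f x) • x‖ := by
  obtain ⟨c, hc, hcf⟩ := hS.exists_forall_le' hf.continuousOn hpos
  obtain ⟨R, hR, hSR⟩ := hS.isBounded.exists_pos_norm_le
  refine ⟨2 * Real.pi * c ^ 2 / (c + K * (1 + R)), by positivity, fun t ht x hx y hy ↦ ?_⟩
  have spacing : 2 * (t + 1) * Real.pi - 2 * t * Real.pi = 2 * Real.pi := by ring
  rw [← spacing]
  exact div_le_abs_sub_add_norm_sub (by positivity) (by gcongr; linarith) hc (hcf x hx) (hcf y hy)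
    K.coe_nonneg (hf.norm_sub_le hy hx) (hSR y hy)

end Separation

theorem lipschitzOnWith_of_norm_deriv_le {𝕜 F : Type*} [RCLike 𝕜] [NormedAddCommGroup F]
    [NormedSpace 𝕜 F] {s : Set 𝕜} {f : 𝕜 → F} {C : ℝ} (hs : Convex ℝ s)
    (hf : ∀ x ∈ s, DifferentiableAt 𝕜 f x) (hC : ∀ x ∈ s, ‖deriv f x‖ ≤ C) :
    LipschitzOnWith C.toNNReal f s :=
  hs.lipschitzOnWith_of_nnnorm_deriv_le hf fun x hx ↦ NNReal.le_toNNReal_of_coe_le (hC x hx)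

theorem lipschitzOnWith_pow_Icc {a : ℝ} (ha : 0 ≤ a) (b : ℝ) (n : ℕ) :
    LipschitzOnWith (n * b ^ (n - 1)).toNNReal (fun x : ℝ ↦ x ^ n) (Icc a b) := by
  refine lipschitzOnWith_of_norm_deriv_le (convex_Icc a b) (fun x _ ↦ differentiableAt_pow n)
    fun x hx ↦ ?_
  have hx₀ : 0 ≤ x := ha.trans hx.1
  rw [deriv_pow_field, Real.norm_of_nonneg (by positivity)]
  gcongr
  exact hx.2

theorem mapsTo_pow_Icc {a : ℝ} (ha : 0 ≤ a) (b : ℝ) (n : ℕ) :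
    MapsTo (fun x : ℝ ↦ x ^ n) (Icc a b) (Icc (a ^ n) (b ^ n)) := fun _ hx ↦
  ⟨pow_le_pow_left₀ ha hx.1 n, pow_le_pow_left₀ (ha.trans hx.1) hx.2 n⟩

/-- **Uniform separation of the approximate eigenvalue curves** (Appendix B, proof of
Lemma 4.5). If `G` is differentiable on `[α₁², α₂²]` with `e₁ ≤ G' ≤ e₂`, `G > 0`, and
`μ_m(θ) = 2mπ·G(θ²)`, then the points `(μ_m(θ), θ·μ_m(θ))` on consecutive curves are
uniformly separated for large `m`. -/
theorem stmt16 (α₁ α₂ e₁ e₂ : ℝ) (hα₁ : 0 < α₁) (hα : α₁ < α₂) (he₁ : 0 < e₁)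
    (he : e₁ ≤ e₂) (G : ℝ → ℝ)
    (hGpos : ∀ s ∈ Set.Icc (α₁ ^ 2) (α₂ ^ 2), 0 < G s)
    (hGd : ∀ s ∈ Set.Icc (α₁ ^ 2) (α₂ ^ 2),
      DifferentiableAt ℝ G s ∧ e₁ ≤ deriv G s ∧ deriv G s ≤ e₂) :
    ∃ δ > 0, ∃ M : ℕ, ∀ m : ℕ, M ≤ m →
      ∀ θ₁ ∈ Set.Icc α₁ α₂, ∀ θ₂ ∈ Set.Icc α₁ α₂,
        δ ≤ |2 * ((m : ℝ) + 1) * Real.pi * G (θ₂ ^ 2)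
              - 2 * (m : ℝ) * Real.pi * G (θ₁ ^ 2)|
          + |θ₂ * (2 * ((m : ℝ) + 1) * Real.pi * G (θ₂ ^ 2))
              - θ₁ * (2 * (m : ℝ) * Real.pi * G (θ₁ ^ 2))| := by
  have hsq : MapsTo (· ^ 2) (Icc α₁ α₂) (Icc (α₁ ^ 2) (α₂ ^ 2)) := mapsTo_pow_Icc hα₁.le α₂ 2
  have hG : LipschitzOnWith e₂.toNNReal G (Icc (α₁ ^ 2) (α₂ ^ 2)) :=
    lipschitzOnWith_of_norm_deriv_le (convex_Icc _ _) (fun s hs ↦ (hGd s hs).1)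
      fun s hs ↦ abs_le.2 ⟨by linarith [hGd s hs], (hGd s hs).2.2⟩
  obtain ⟨δ, hδ, hsep⟩ := stmt16_general isCompact_Icc
    (hG.comp (lipschitzOnWith_pow_Icc hα₁.le α₂ 2) hsq) fun θ hθ ↦ hGpos _ (hsq hθ)
  refine ⟨δ, hδ, 0, fun m _ θ₁ hθ₁ θ₂ hθ₂ ↦ ?_⟩
  simpa only [Function.comp_apply, smul_eq_mul, Real.norm_eq_abs, mul_comm θ₁, mul_comm θ₂]
    using hsep m m.cast_nonneg θ₁ hθ₁ θ₂ hθ₂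
end

section
/- Let s_{22} : ℝ → ℝ and s_{33} : ℝ → ℝ be C¹ with −1 < s_{22}(x²) < 0 and −1 < s_{33}(x³) < 0 for all x², x³; set s_{23} = 1 + s_{22} and s_{32} = 1 + s_{33}, and assume s^{11}(x²,x³) = s_{22}(x²)s_{33}(x³) − s_{23}(x²)s_{32}(x³) > 0 everywhere. Define p = (p₁, p₂) : ℝ² × (ℝ² ∖ {0}) → ℝ² by p₁(x²,x³,ξ₂,ξ₃) = sqrt( ( −s_{33}(x³)·ξ₂² + s_{23}(x²)·ξ₃² ) / s^{11}(x²,x³) ) and p₂(x²,x³,ξ₂,ξ₃) = sqrt( ( s_{32}(x³)·ξ₂² − s_{22}(x²)·ξ₃² ) / s^{11}(x²,x³) ). Let (x²,x³,ξ₂,ξ₃) be a point with (ξ₂,ξ₃) ≠ (0,0). If ξ₂·ξ₃ ≠ 0, or if ξ₃ = 0 and s_{33}'(x³) ≠ 0, or if ξ₂ = 0 and s_{22}'(x²) ≠ 0, then the derivative of p at this point is a surjective linear map from ℝ⁴ onto ℝ². -/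
/-!
Put `h = p₁²` and `l = p₂²`. Inverting the `2 × 2` Stäckel matrix separates the variables:
`s₂₂(x²) h + s₂₃(x²) l = -ξ₂²` and `s₃₂(x³) h + s₃₃(x³) l = -ξ₃²`. Differentiating these two
relations implicitly gives `T ∘ dp = -G`, where `T` is invertible because `p₁`, `p₂` and the Stäckel
determinant do not vanish. The first component of `G` involves only `(dx², dξ₂)` and the second only
`(dx³, dξ₃)`, so `G`, and with it `dp`, is onto exactly when neither component is zero. When
`s₂₃ = 1 + s₂₂` and `s₃₂ = 1 + s₃₃`, these components are `2 ξ₂ dξ₂ + s₂₂' (h + l) dx²` and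
`2 ξ₃ dξ₃ + s₃₃' (h + l) dx³`, where `h + l > 0`.
-/

open Filter Topology Function

section LinearAlgebra

variable {K : Type*} [Field K] {a b c d : K}

theorem bijective_prod_of_det_ne_zero (h : a * d - b * c ≠ 0) :
    Bijective fun w : K × K => (a * w.1 + b * w.2, c * w.1 + d * w.2) := by
  obtain ⟨r, hr⟩ : ∃ r, (a * d - b * c) * r = 1 := ⟨_, mul_inv_cancel₀ h⟩
  refine bijective_iff_has_inverse.2
    ⟨fun z => (r * (d * z.1 - b * z.2), r * (a * z.2 - c * z.1)),
      fun w => Prod.ext ?_ ?_, fun z => Prod.ext ?_ ?_⟩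
  · linear_combination w.1 * hr
  · linear_combination w.2 * hr
  · linear_combination z.1 * hr
  · linear_combination z.2 * hr

theorem surjective_mul_add_mul_iff :
    Surjective (fun w : K × K => a * w.1 + b * w.2) ↔ a ≠ 0 ∨ b ≠ 0 := by
  constructor
  · intro h
    obtain ⟨w, hw⟩ := h 1
    by_contra! h0
    simp [h0.1, h0.2] at hw
  · rintro (h | h) y
    · exact ⟨(y / a, 0), by simp [mul_div_cancel₀ y h]⟩
    · exact ⟨(0, y / b), by simp [mul_div_cancel₀ y h]⟩

theorem surjective_interleaved_iff :
    Surjective (fun w : K × K × K × K => (a * w.2.2.1 + b * w.1, c * w.2.2.2 + d * w.2.1)) ↔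
      (a ≠ 0 ∨ b ≠ 0) ∧ (c ≠ 0 ∨ d ≠ 0) := by
  have reorder : Surjective fun w : K × K × K × K => ((w.2.2.1, w.1), (w.2.2.2, w.2.1)) :=
    fun z => ⟨(z.1.2, z.2.2, z.1.1, z.2.1), rfl⟩
  rw [← surjective_mul_add_mul_iff, ← surjective_mul_add_mul_iff, ← Prod.map_surjective,
    ← reorder.of_comp_iff]
  rfl

end LinearAlgebra

theorem add_mul_sq_pos {a b x y : ℝ} (ha : 0 < a) (hb : 0 < b) (h : (x, y) ≠ (0, 0)) :
    0 < a * x ^ 2 + b * y ^ 2 := by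
  rcases eq_or_ne x 0 with rfl | hx
  · have hy : y ≠ 0 := fun hy => h (by rw [hy])
    positivity
  · positivity

theorem fderiv_separation_relation {E : Type*} [NormedAddCommGroup E] [NormedSpace ℝ E]
    {a b : ℝ → ℝ} {a' b' : ℝ} {x ξ u v : E → ℝ} {x' ξ' u' v' : E →L[ℝ] ℝ} {q : E}
    (ha : HasDerivAt a a' (x q)) (hb : HasDerivAt b b' (x q)) (hx : HasFDerivAt x x' q)
    (hξ : HasFDerivAt ξ ξ' q) (hu : HasFDerivAt u u' q) (hv : HasFDerivAt v v' q)
    (h : ∀ᶠ y in 𝓝 q, a (x y) * u y ^ 2 + b (x y) * v y ^ 2 = -ξ y ^ 2) (w : E) :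
    2 * a (x q) * u q * u' w + 2 * b (x q) * v q * v' w =
      -(2 * ξ q * ξ' w + (a' * u q ^ 2 + b' * v q ^ 2) * x' w) := by
  have hl := ((ha.comp_hasFDerivAt q hx).mul (hu.pow 2)).add
    ((hb.comp_hasFDerivAt q hx).mul (hv.pow 2))
  have hr := (hξ.pow 2).neg
  have key := DFunLike.congr_fun (hl.unique (hr.congr_of_eventuallyEq h)) w
  simp only [comp_apply, Nat.add_one_sub_one, pow_one, nsmul_eq_mul, Nat.cast_ofNat, add_apply,
    smul_apply, smul_eq_mul, neg_apply] at key
  linear_combination key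

/-- The angular block of a Stäckel matrix: the row `(s22, s23)` depends on `x²` only and the row
`(s32, s33)` on `x³` only. -/
structure StackelMatrix where
  (s22 s23 s32 s33 : ℝ → ℝ)

namespace StackelMatrix

/-- The cofactor `s¹¹` of the full Stäckel matrix. As in all definitions below, the argument is a
point `(x², x³, ξ₂, ξ₃)` of the cotangent bundle. -/
def det (S : StackelMatrix) (q : ℝ × ℝ × ℝ × ℝ) : ℝ :=
  S.s22 q.1 * S.s33 q.2.1 - S.s23 q.1 * S.s32 q.2.1

/-- The principal symbol `p₁²` of the angular operator `H`. -/
noncomputable def symbolH (S : StackelMatrix) (q : ℝ × ℝ × ℝ × ℝ) : ℝ :=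
  (-(S.s33 q.2.1) * q.2.2.1 ^ 2 + S.s23 q.1 * q.2.2.2 ^ 2) / S.det q

/-- The principal symbol `p₂²` of the angular operator `L`. -/
noncomputable def symbolL (S : StackelMatrix) (q : ℝ × ℝ × ℝ × ℝ) : ℝ :=
  (S.s32 q.2.1 * q.2.2.1 ^ 2 - S.s22 q.1 * q.2.2.2 ^ 2) / S.det q

/-- The momentum map `p = (p₁, p₂)`, whose components are the principal symbols of `√H` and
`√L`. -/
noncomputable def momentumMap (S : StackelMatrix) (q : ℝ × ℝ × ℝ × ℝ) : ℝ × ℝ :=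
  (Real.sqrt (S.symbolH q), Real.sqrt (S.symbolL q))

/-- Differentiability of the four entries of the Stäckel matrix at the base point of `q`. -/
structure EntriesDifferentiableAt (S : StackelMatrix) (q : ℝ × ℝ × ℝ × ℝ) : Prop where
  s22 : DifferentiableAt ℝ S.s22 q.1
  s23 : DifferentiableAt ℝ S.s23 q.1
  s32 : DifferentiableAt ℝ S.s32 q.2.1
  s33 : DifferentiableAt ℝ S.s33 q.2.1

variable {S : StackelMatrix} {q : ℝ × ℝ × ℝ × ℝ}

theorem symbolH_pos (h23 : 0 < S.s23 q.1) (h33 : S.s33 q.2.1 < 0) (hdet : 0 < S.det q)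
    (hξ : q.2.2 ≠ (0, 0)) : 0 < S.symbolH q :=
  div_pos (add_mul_sq_pos (neg_pos.2 h33) h23 hξ) hdet

theorem symbolL_pos (h22 : S.s22 q.1 < 0) (h32 : 0 < S.s32 q.2.1) (hdet : 0 < S.det q)
    (hξ : q.2.2 ≠ (0, 0)) : 0 < S.symbolL q := by
  refine div_pos ?_ hdet
  rw [sub_eq_add_neg, ← neg_mul]
  exact add_mul_sq_pos h32 (neg_pos.2 h22) hξ

theorem s22_mul_symbolH_add_s23_mul_symbolL (hdet : S.det q ≠ 0) :
    S.s22 q.1 * S.symbolH q + S.s23 q.1 * S.symbolL q = -q.2.2.1 ^ 2 := by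
  unfold symbolH symbolL
  field_simp
  unfold det
  ring

theorem s32_mul_symbolH_add_s33_mul_symbolL (hdet : S.det q ≠ 0) :
    S.s32 q.2.1 * S.symbolH q + S.s33 q.2.1 * S.symbolL q = -q.2.2.2 ^ 2 := by
  unfold symbolH symbolL
  field_simp
  unfold det
  ring

namespace EntriesDifferentiableAt

theorem differentiableAt_det (hS : S.EntriesDifferentiableAt q) : DifferentiableAt ℝ S.det q := by
  obtain ⟨h22, h23, h32, h33⟩ := hS
  unfold det
  fun_prop

theorem differentiableAt_symbolH (hS : S.EntriesDifferentiableAt q) (hdet : S.det q ≠ 0) :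
    DifferentiableAt ℝ S.symbolH q := by
  have hd := hS.differentiableAt_det
  obtain ⟨-, h23, -, h33⟩ := hS
  unfold symbolH
  fun_prop (disch := assumption)

theorem differentiableAt_symbolL (hS : S.EntriesDifferentiableAt q) (hdet : S.det q ≠ 0) :
    DifferentiableAt ℝ S.symbolL q := by
  have hd := hS.differentiableAt_det
  obtain ⟨h22, -, h32, -⟩ := hS
  unfold symbolL
  fun_prop (disch := assumption)

theorem eventually_separated (hS : S.EntriesDifferentiableAt q) (hdet : S.det q ≠ 0)
    (hH : 0 < S.symbolH q) (hL : 0 < S.symbolL q) :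
    ∀ᶠ y in 𝓝 q,
      S.s22 y.1 * (S.momentumMap y).1 ^ 2 + S.s23 y.1 * (S.momentumMap y).2 ^ 2 = -y.2.2.1 ^ 2 ∧
      S.s32 y.2.1 * (S.momentumMap y).1 ^ 2 + S.s33 y.2.1 * (S.momentumMap y).2 ^ 2 =
        -y.2.2.2 ^ 2 := by
  filter_upwards [hS.differentiableAt_det.continuousAt.eventually_ne hdet,
    (hS.differentiableAt_symbolH hdet).continuousAt.eventually (lt_mem_nhds hH),
    (hS.differentiableAt_symbolL hdet).continuousAt.eventually (lt_mem_nhds hL)] with y hy hHy hLy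
  simp only [momentumMap, Real.sq_sqrt hHy.le, Real.sq_sqrt hLy.le]
  exact ⟨s22_mul_symbolH_add_s23_mul_symbolL hy, s32_mul_symbolH_add_s33_mul_symbolL hy⟩

theorem differentiableAt_momentumMap (hS : S.EntriesDifferentiableAt q) (hdet : S.det q ≠ 0)
    (hH : 0 < S.symbolH q) (hL : 0 < S.symbolL q) : DifferentiableAt ℝ S.momentumMap q :=
  ((hS.differentiableAt_symbolH hdet).sqrt hH.ne').prodMk
    ((hS.differentiableAt_symbolL hdet).sqrt hL.ne')

theorem fderiv_momentumMap_separated (hS : S.EntriesDifferentiableAt q) (hdet : S.det q ≠ 0)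
    (hH : 0 < S.symbolH q) (hL : 0 < S.symbolL q) (w : ℝ × ℝ × ℝ × ℝ) :
    (2 * S.s22 q.1 * (S.momentumMap q).1 * (fderiv ℝ S.momentumMap q w).1 +
        2 * S.s23 q.1 * (S.momentumMap q).2 * (fderiv ℝ S.momentumMap q w).2,
      2 * S.s32 q.2.1 * (S.momentumMap q).1 * (fderiv ℝ S.momentumMap q w).1 +
        2 * S.s33 q.2.1 * (S.momentumMap q).2 * (fderiv ℝ S.momentumMap q w).2) =
    -(2 * q.2.2.1 * w.2.2.1 +
        (deriv S.s22 q.1 * S.symbolH q + deriv S.s23 q.1 * S.symbolL q) * w.1,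
      2 * q.2.2.2 * w.2.2.2 +
        (deriv S.s32 q.2.1 * S.symbolH q + deriv S.s33 q.2.1 * S.symbolL q) * w.2.1) := by
  have hp := (hS.differentiableAt_momentumMap hdet hH hL).hasFDerivAt
  have hx : HasFDerivAt id (.id ℝ _) q := hasFDerivAt_id q
  have hsep := hS.eventually_separated hdet hH hL
  have hp₁ : (S.momentumMap q).1 ^ 2 = S.symbolH q := Real.sq_sqrt hH.le
  have hp₂ : (S.momentumMap q).2 ^ 2 = S.symbolL q := Real.sq_sqrt hL.le
  rw [← hp₁, ← hp₂]
  exact Prod.ext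
    (fderiv_separation_relation hS.s22.hasDerivAt hS.s23.hasDerivAt hx.fst hx.snd.snd.fst
      hp.fst hp.snd (hsep.mono fun _ h => h.1) w)
    (fderiv_separation_relation (x := fun y => y.2.1) hS.s32.hasDerivAt hS.s33.hasDerivAt hx.snd.fst
      hx.snd.snd.snd hp.fst hp.snd (hsep.mono fun _ h => h.2) w)

theorem surjective_fderiv_momentumMap_iff (hS : S.EntriesDifferentiableAt q) (hdet : S.det q ≠ 0)
    (hH : 0 < S.symbolH q) (hL : 0 < S.symbolL q) :
    Surjective (fderiv ℝ S.momentumMap q) ↔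
      (q.2.2.1 ≠ 0 ∨ deriv S.s22 q.1 * S.symbolH q + deriv S.s23 q.1 * S.symbolL q ≠ 0) ∧
      (q.2.2.2 ≠ 0 ∨ deriv S.s32 q.2.1 * S.symbolH q + deriv S.s33 q.2.1 * S.symbolL q ≠ 0) := by
  have hp₁ : (S.momentumMap q).1 ≠ 0 := (Real.sqrt_pos.2 hH).ne'
  have hp₂ : (S.momentumMap q).2 ≠ 0 := (Real.sqrt_pos.2 hL).ne'
  have hT : (2 * S.s22 q.1 * (S.momentumMap q).1) * (2 * S.s33 q.2.1 * (S.momentumMap q).2) -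
      (2 * S.s23 q.1 * (S.momentumMap q).2) * (2 * S.s32 q.2.1 * (S.momentumMap q).1) ≠ 0 := by
    have : 4 * (S.momentumMap q).1 * (S.momentumMap q).2 * S.det q ≠ 0 := by positivity
    convert this using 1
    unfold det
    ring
  have hTp := funext (hS.fderiv_momentumMap_separated hdet hH hL)
  rw [← Surjective.of_comp_iff' (bijective_prod_of_det_ne_zero hT)]
  refine (iff_of_eq (congrArg Surjective hTp)).trans ?_
  refine (Surjective.of_comp_iff' (Equiv.neg (ℝ × ℝ)).bijective _).trans ?_
  simp only [surjective_interleaved_iff, mul_ne_zero_iff_left (two_ne_zero' ℝ)]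

end EntriesDifferentiableAt

end StackelMatrix

theorem stmt17_general {s22 s33 : ℝ → ℝ} {x2 x3 ξ2 ξ3 : ℝ}
    (hs22 : DifferentiableAt ℝ s22 x2) (hs33 : DifferentiableAt ℝ s33 x3)
    (hb22 : -1 < s22 x2 ∧ s22 x2 < 0) (hb33 : -1 < s33 x3 ∧ s33 x3 < 0)
    (hm : 0 < s22 x2 * s33 x3 - (1 + s22 x2) * (1 + s33 x3)) (hξ : (ξ2, ξ3) ≠ (0, 0)) :
    Surjective (fderiv ℝ
        (StackelMatrix.momentumMap ⟨s22, fun x => 1 + s22 x, fun x => 1 + s33 x, s33⟩)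
        (x2, x3, ξ2, ξ3)) ↔
      (ξ2 ≠ 0 ∨ deriv s22 x2 ≠ 0) ∧ (ξ3 ≠ 0 ∨ deriv s33 x3 ≠ 0) := by
  set S : StackelMatrix := ⟨s22, fun x => 1 + s22 x, fun x => 1 + s33 x, s33⟩
  set q : ℝ × ℝ × ℝ × ℝ := (x2, x3, ξ2, ξ3)
  have hS : S.EntriesDifferentiableAt q := ⟨hs22, hs22.const_add 1, hs33.const_add 1, hs33⟩
  have hdet : 0 < S.det q := hm
  have hH : 0 < S.symbolH q :=
    StackelMatrix.symbolH_pos (neg_lt_iff_pos_add'.1 hb22.1) hb33.2 hdet hξ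
  have hL : 0 < S.symbolL q :=
    StackelMatrix.symbolL_pos hb22.2 (neg_lt_iff_pos_add'.1 hb33.1) hdet hξ
  have hHL : S.symbolH q + S.symbolL q ≠ 0 := (add_pos hH hL).ne'
  simpa only [S, q, deriv_const_add, ← mul_add, mul_ne_zero_iff_right hHL] using
    hS.surjective_fderiv_momentumMap_iff hdet.ne' hH hL

/-- **Critical-point analysis of the momentum map** (Appendix C, proof of Lemma 4.6).
At every point where `ξ₂ξ₃ ≠ 0`, or `ξ₃ = 0` and `s₃₃'(x³) ≠ 0`, or `ξ₂ = 0` and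
`s₂₂'(x²) ≠ 0`, the derivative of `p = (p₁, p₂)` is surjective onto `ℝ²`. -/
theorem stmt17 (s22 s33 : ℝ → ℝ) (hs22 : ContDiff ℝ 1 s22) (hs33 : ContDiff ℝ 1 s33)
    (hb22 : ∀ x, -1 < s22 x ∧ s22 x < 0) (hb33 : ∀ x, -1 < s33 x ∧ s33 x < 0)
    (hm : ∀ x2 x3 : ℝ, 0 < s22 x2 * s33 x3 - (1 + s22 x2) * (1 + s33 x3))
    (x2 x3 ξ2 ξ3 : ℝ) (hξ : (ξ2, ξ3) ≠ (0, 0))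
    (hcond : ξ2 * ξ3 ≠ 0 ∨ (ξ3 = 0 ∧ deriv s33 x3 ≠ 0) ∨ (ξ2 = 0 ∧ deriv s22 x2 ≠ 0)) :
    Function.Surjective
      (⇑(fderiv ℝ (fun q : ℝ × ℝ × ℝ × ℝ =>
        ((Real.sqrt ((-(s33 q.2.1) * q.2.2.1 ^ 2 + (1 + s22 q.1) * q.2.2.2 ^ 2)
              / (s22 q.1 * s33 q.2.1 - (1 + s22 q.1) * (1 + s33 q.2.1))),
          Real.sqrt (((1 + s33 q.2.1) * q.2.2.1 ^ 2 - s22 q.1 * q.2.2.2 ^ 2)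
              / (s22 q.1 * s33 q.2.1 - (1 + s22 q.1) * (1 + s33 q.2.1)))) : ℝ × ℝ))
        (x2, x3, ξ2, ξ3))) := by
  refine (stmt17_general (hs22.differentiable one_ne_zero x2) (hs33.differentiable one_ne_zero x3)
    (hb22 x2) (hb33 x3) (hm x2 x3) hξ).2 ?_
  grind
end
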